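/- arXiv:2209.00921 — 2 statements merged into one kernel-verified Lean document; each statement's English description precedes it below -/
import Mathlib

section
/- Assume r = dim g(−1)₁̄ is odd and e = e_θ is minimal. The minimal finite W-superalgebra U(g₀,e) is generated by the even elements Θ′_{h_i} = h_i⊗1_χ (1 ≤ i ≤ k−1) and C′_θ = (2e + ½h² − (3/2)h + FE)⊗1_χ, and the odd elements Θ′_E = (E + ½Fh − ¾F)⊗1_χ and Θ′_F = F⊗1_χ, subject to the relations [Θ′_E,Θ′_E] = C′_θ + (1/8)⊗1_χ and [Θ′_F,Θ′_F] = −2⊗1_χ, all commutators between the other pairs of generators being zero. -/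
/-!
STATEMENT 14 (Proposition `fiosp` of the paper).

`g₀ = h^e ⊕ s_θ` is the centralizer of `h^e` in `g`, with `s_θ ≅ osp(1|2)`
spanned by `e, h, f` and `F = √−2·v_{(r+1)/2}`, `E = [F, e]` (the case `r` odd,
`e = e_θ` minimal).  `U(g₀)` is encoded below as a ℂ-algebra `Ug0` containing
the images `ιh i, ιe, ιH, ιf, ιE, ιF` of the basis of `g₀`, subject to the
super-commutation relations of Lemma `osp12genecom` and the PBW theorem.

`m₀ = ℂf`, `(I₀)_χ` is the left ideal of `U(g₀)` generated by `f − 1`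
(note `χ(f) = (e,f) = 1`), `(Q₀)_χ = U(g₀)/(I₀)_χ`, and the minimal finite
`W`-superalgebra is `U(g₀,e) = (Q₀)_χ^{ad m₀}`, the set of cosets fixed by
`ad f`.

Claim: `U(g₀,e)` is generated by the (cosets of the) even elements
`Θ′_{h_i} = h_i⊗1` and `C′_θ = (2e + ½h² − (3/2)h + FE)⊗1` and the odd
elements `Θ′_E = (E + ½Fh − ¾F)⊗1` and `Θ′_F = F⊗1`, subject to the relations
`[Θ′_E,Θ′_E] = C′_θ + 1/8`, `[Θ′_F,Θ′_F] = −2`, all other commutators between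
generators being zero; subject-to-relations is recorded by the PBW property:
the monomials `Θ′_F^{ι}·∏Θ′_{h_i}^{t_i}·C′_θ^{t_k}·Θ′_E^{ε}` form a ℂ-basis
of `U(g₀,e)`.
-/
noncomputable section

open scoped BigOperators

/-- The ordered product of a finite family of elements of a ring. -/
def ringProd {A : Type} [Ring A] {n : ℕ} (F : Fin n → A) : A := (List.ofFn F).prod

section helpers

set_option linter.unusedSimpArgs false
set_option linter.unusedSectionVars false
set_option linter.unusedVariables false

variable {km : ℕ} {U : Type} [Ring U] [Algebra ℂ U]

structure OspRel (h : Fin km → U) (e H f E F : U) : Prop where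
  he : e = E * E
  hf : f = -(F * F)
  hEF : E * F = H - F * E
  hHF : H * F = F * H - F
  hEH : E * H = H * E - E
  hhE : ∀ i, h i * E = E * h i
  hhF : ∀ i, h i * F = F * h i
  hhH : ∀ i, h i * H = H * h i
  hhh : ∀ i j, h i * h j = h j * h i

def ZZ (e H f E F : U) : U :=
  (2 : ℂ) • (f * e) + (1/2 : ℂ) • (H * H) + (1/2 : ℂ) • H + F * E

def EP (H f E F : U) : U := E * f + (1/2 : ℂ) • (F * H) - (3/4 : ℂ) • F

namespace OspRel

variable {h : Fin km → U} {e H f E F : U}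

theorem hEF' (R : OspRel h e H f E F) (x : U) : E * (F * x) = H * x - F * (E * x) := by
  rw [← mul_assoc, R.hEF, sub_mul, mul_assoc]
theorem hHF' (R : OspRel h e H f E F) (x : U) : H * (F * x) = F * (H * x) - F * x := by
  rw [← mul_assoc, R.hHF, sub_mul, mul_assoc]
theorem hEH' (R : OspRel h e H f E F) (x : U) : E * (H * x) = H * (E * x) - E * x := by
  rw [← mul_assoc, R.hEH, sub_mul, mul_assoc]

theorem f_F (R : OspRel h e H f E F) : f * F = F * f := by
  simp only [R.hf, neg_mul, mul_neg, mul_assoc]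

theorem f_H (R : OspRel h e H f E F) : f * H = (H + (2 : ℂ) • 1) * f := by
  simp only [R.hf, mul_add, add_mul, mul_sub, sub_mul, neg_mul, mul_neg, mul_assoc,
    R.hEF, R.hEF', R.hHF, R.hHF', R.hEH, R.hEH', smul_mul_assoc, mul_smul_comm, mul_one, one_mul]
  module

theorem Z_E (R : OspRel h e H f E F) : Commute (ZZ e H f E F) E := by
  simp only [Commute, SemiconjBy, ZZ, R.he, R.hf, mul_add, add_mul, mul_sub, sub_mul, neg_mul,
    mul_neg, mul_assoc,
    R.hEF, R.hEF', R.hHF, R.hHF', R.hEH, R.hEH', smul_mul_assoc, mul_smul_comm, mul_one, one_mul]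
  module

theorem Z_F (R : OspRel h e H f E F) : Commute (ZZ e H f E F) F := by
  simp only [Commute, SemiconjBy, ZZ, R.he, R.hf, mul_add, add_mul, mul_sub, sub_mul, neg_mul,
    mul_neg, mul_assoc,
    R.hEF, R.hEF', R.hHF, R.hHF', R.hEH, R.hEH', smul_mul_assoc, mul_smul_comm, mul_one, one_mul]
  module

theorem H_eq (R : OspRel h e H f E F) : H = E * F + F * E := by
  rw [R.hEF]; abel

theorem f_h (R : OspRel h e H f E F) (i) : Commute (h i) f := by
  rw [R.hf]; exact ((show Commute (h i) F from R.hhF i).mul_right (R.hhF i)).neg_right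
theorem e_h (R : OspRel h e H f E F) (i) : Commute (h i) e := by
  rw [R.he]; exact ((show Commute (h i) E from R.hhE i).mul_right (R.hhE i))

theorem Z_f (R : OspRel h e H f E F) : Commute (ZZ e H f E F) f := by
  conv_rhs => rw [R.hf]
  exact (R.Z_F.mul_right R.Z_F).neg_right
theorem Z_H (R : OspRel h e H f E F) : Commute (ZZ e H f E F) H := by
  have : Commute (ZZ e H f E F) (E * F + F * E) :=
    (R.Z_E.mul_right R.Z_F).add_right (R.Z_F.mul_right R.Z_E)
  rwa [← R.H_eq] at this
theorem h_Z (R : OspRel h e H f E F) (i) : Commute (h i) (ZZ e H f E F) := by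
  have a : Commute (h i) E := R.hhE i
  have b : Commute (h i) F := R.hhF i
  have c : Commute (h i) H := R.hhH i
  exact (((((R.f_h i).mul_right (R.e_h i)).smul_right _).add_right
    ((c.mul_right c).smul_right _)).add_right (c.smul_right _)).add_right (b.mul_right a)
theorem h_EP (R : OspRel h e H f E F) (i) : Commute (h i) (EP H f E F) := by
  have a : Commute (h i) E := R.hhE i
  have b : Commute (h i) F := R.hhF i
  have c : Commute (h i) H := R.hhH i
  exact ((a.mul_right (R.f_h i)).add_right ((b.mul_right c).smul_right _)).sub_right
    (b.smul_right _)
theorem Z_EP (R : OspRel h e H f E F) : Commute (ZZ e H f E F) (EP H f E F) :=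
  ((R.Z_E.mul_right R.Z_f).add_right ((R.Z_F.mul_right R.Z_H).smul_right _)).sub_right
    (R.Z_F.smul_right _)

theorem EP_F (R : OspRel h e H f E F) : EP H f E F * F = - (F * EP H f E F) := by
  simp only [EP, R.he, R.hf, mul_add, add_mul, mul_sub, sub_mul, neg_mul,
    mul_neg, mul_assoc,
    R.hEF, R.hEF', R.hHF, R.hHF', R.hEH, R.hEH', smul_mul_assoc, mul_smul_comm, mul_one, one_mul]
  module

theorem EP_f (R : OspRel h e H f E F) : Commute (EP H f E F) f := by
  conv_rhs => rw [R.hf]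
  refine Commute.neg_right ?_
  simp only [Commute, SemiconjBy]
  rw [← mul_assoc, R.EP_F, neg_mul, mul_assoc, R.EP_F, mul_neg, neg_neg, mul_assoc]

theorem EP_EP (R : OspRel h e H f E F) : EP H f E F * EP H f E F =
    ((1/2 : ℂ) • ZZ e H f E F + (1/16 : ℂ) • 1) * f := by
  simp only [EP, ZZ, R.he, R.hf, mul_add, add_mul, mul_sub, sub_mul, neg_mul,
    mul_neg, mul_assoc, smul_add, smul_sub, smul_neg,
    R.hEF, R.hEF', R.hHF, R.hHF', R.hEH, R.hEH', smul_mul_assoc, mul_smul_comm, mul_one, one_mul]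
  module

theorem EP_eq (R : OspRel h e H f E F) :
    EP H f E F = f * E + F * ((1/2 : ℂ) • H + (1/4 : ℂ) • 1) := by
  simp only [EP, R.he, R.hf, mul_add, add_mul, mul_sub, sub_mul, neg_mul,
    mul_neg, mul_assoc,
    R.hEF, R.hEF', R.hHF, R.hHF', R.hEH, R.hEH', smul_mul_assoc, mul_smul_comm, mul_one, one_mul]
  module

theorem yC_sub (R : OspRel h e H f E F) :
    (2 : ℂ) • e + (1/2 : ℂ) • (H * H) - (3/2 : ℂ) • H + F * E - ZZ e H f E F
      = ((-2 : ℂ) • e) * (f - 1) := by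
  simp only [ZZ, R.he, R.hf, mul_add, add_mul, mul_sub, sub_mul, neg_mul,
    mul_neg, mul_assoc, smul_add, smul_sub, smul_neg,
    R.hEF, R.hEF', R.hHF, R.hHF', R.hEH, R.hEH', smul_mul_assoc, mul_smul_comm, mul_one, one_mul]
  module

theorem yE_sub :
    E + (1/2 : ℂ) • (F * H) - (3/4 : ℂ) • F - EP H f E F = (-E) * (f - 1) := by
  simp only [EP, mul_sub, mul_one, neg_mul]
  module

end OspRel

/-! ordered products -/

def GG (h : Fin km → U) (t : Fin km → ℕ) : U := ringProd (fun i => h i ^ t i)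

theorem GG_zero (h : Fin km → U) : GG h 0 = 1 := by
  simp [GG, ringProd]

theorem GG_commute (h : Fin km → U) (t : Fin km → ℕ) (x : U) (hx : ∀ i, Commute x (h i)) :
    Commute x (GG h t) := by
  unfold GG ringProd
  apply Commute.list_prod_right
  intro y hy
  rw [List.mem_ofFn] at hy
  obtain ⟨i, rfl⟩ := hy
  exact (hx i).pow_right _

theorem GG_step {n : ℕ} (h : Fin n → U) (hc : ∀ i j, Commute (h i) (h j)) (t : Fin n → ℕ)
    (i : Fin n) : h i * GG h t = GG h (t + Pi.single i 1) := by
  induction n with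
  | zero => exact i.elim0
  | succ n ih =>
    have key : ∀ s : Fin (n+1) → ℕ, GG h s = h 0 ^ s 0 * GG (fun j => h j.succ) (fun j => s j.succ) := by
      intro s
      simp [GG, ringProd, List.ofFn_succ]
    rw [key, key]
    refine Fin.cases ?_ (fun j => ?_) i
    · rw [← mul_assoc, ← pow_succ']
      simp
    · rw [← mul_assoc, ((hc j.succ 0).pow_right _).eq, mul_assoc,
        ih (fun j => h j.succ) (fun a b => hc _ _) (fun j => t j.succ) j]
      have h1 : (t + Pi.single j.succ 1 : Fin (n+1) → ℕ) 0 = t 0 := by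
        simp
      have h2 : (fun a : Fin n => (t + Pi.single j.succ 1 : Fin (n+1) → ℕ) a.succ)
          = (fun a => t a.succ) + Pi.single j 1 := by
        funext a
        simp [Pi.single_apply]
      rw [h1, h2]


def II (f : U) : Submodule U U := Submodule.span U {f - 1}

theorem mem_II {f x : U} : x ∈ II f ↔ ∃ u, u * (f - 1) = x := by
  simp [II, Submodule.mem_span_singleton]

theorem II_left {f x : U} (u : U) (hx : x ∈ II f) : u * x ∈ II f :=
  (II f).smul_mem u hx

theorem II_smul {f x : U} (c : ℂ) (hx : x ∈ II f) : c • x ∈ II f := by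
  have := II_left (c • 1) hx
  simpa using this

theorem II_right {f x y : U} (hx : x ∈ II f) (hy : Commute y f) : x * y ∈ II f := by
  obtain ⟨u, rfl⟩ := mem_II.1 hx
  refine mem_II.2 ⟨u * y, ?_⟩
  have : Commute y (f - 1) := hy.sub_right (Commute.one_right y)
  rw [mul_assoc, mul_assoc, this.eq]

/-- congruence of products -/
theorem II_mul {f x x' y y' : U} (hx : x - x' ∈ II f) (hy : y - y' ∈ II f) (hc : Commute y' f) :
    x * y - x' * y' ∈ II f := by
  have : x * y - x' * y' = x * (y - y') + (x - x') * y' := by noncomm_ring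
  rw [this]
  exact add_mem (II_left _ hy) (II_right hx hc)

theorem II_pow {f x x' : U} (hx : x - x' ∈ II f) (hc : Commute x' f) (n : ℕ) :
    x ^ n - x' ^ n ∈ II f := by
  induction n with
  | zero => simp
  | succ n ih => rw [pow_succ, pow_succ]; exact II_mul ih hx hc

theorem II_ad {f x x' : U} (hx : x - x' ∈ II f) (hc : Commute x' f) :
    f * x - x * f ∈ II f := by
  have : f * x - x * f = f * (x - x') - (x - x') * f := by
    rw [mul_sub, sub_mul, hc.eq]; abel
  rw [this]
  exact sub_mem (II_left _ hx) (II_right hx (Commute.refl f))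

theorem mulf_sub (f x : U) : x * f - x ∈ II f := mem_II.2 ⟨x, by rw [mul_sub, mul_one]⟩

def ww (h : Fin km → U) (e H f E F : U) (z : Fin 2 × (Fin km → ℕ) × ℕ × Fin 2) : U :=
  F ^ (z.1 : ℕ) * GG h z.2.1 * ZZ e H f E F ^ z.2.2.1 * EP H f E F ^ (z.2.2.2 : ℕ)

def KK (h : Fin km → U) (e H f E F : U) : Submodule ℂ U :=
  Submodule.span ℂ (Set.range (ww h e H f E F))

def IC (f : U) : Submodule ℂ U := (II f).restrictScalars ℂ

theorem mem_IC {f x : U} : x ∈ IC f ↔ x ∈ II f := Iff.rfl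

def KI (h : Fin km → U) (e H f E F : U) : Submodule ℂ U := KK h e H f E F ⊔ IC f

namespace OspRel
variable {h : Fin km → U} {e H f E F : U}

theorem ww_f (R : OspRel h e H f E F) (z) : Commute (ww h e H f E F z) f := by
  refine ((Commute.mul_left ?_ ?_).mul_left (R.Z_f.pow_left _)).mul_left (R.EP_f.pow_left _)
  · exact Commute.pow_left R.f_F.symm _
  · exact (GG_commute _ _ _ (fun i => (R.f_h i).symm)).symm

theorem KK_f (R : OspRel h e H f E F) {x : U} (hx : x ∈ KK h e H f E F) : Commute x f := by
  induction hx using Submodule.span_induction with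
  | mem x hx => obtain ⟨z, rfl⟩ := hx; exact R.ww_f z
  | zero => exact Commute.zero_left _
  | add x y _ _ hx hy => exact hx.add_left hy
  | smul c x _ hx => exact hx.smul_left c

theorem ww_mem (z) : ww h e H f E F z ∈ KK h e H f E F := Submodule.subset_span ⟨z, rfl⟩

theorem KI_stable {g : U} (hg : ∀ z, g * ww h e H f E F z ∈ KI h e H f E F) {x : U}
    (hx : x ∈ KI h e H f E F) : g * x ∈ KI h e H f E F := by
  obtain ⟨y, hy, i, hi, rfl⟩ := Submodule.mem_sup.1 hx
  rw [mul_add]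
  refine add_mem ?_ (Submodule.mem_sup_right (II_left _ hi))
  clear hx
  induction hy using Submodule.span_induction with
  | mem x hx => obtain ⟨z, rfl⟩ := hx; exact hg z
  | zero => simp
  | add x y _ _ hx hy => rw [mul_add]; exact add_mem hx hy
  | smul c x _ hx => rw [mul_smul_comm]; exact Submodule.smul_mem _ _ hx

theorem KI_mulf (R : OspRel h e H f E F) {x : U} (hx : x ∈ KK h e H f E F) :
    x * f ∈ KI h e H f E F := by
  have : x * f = x + (x * f - x) := by abel
  rw [this]
  exact add_mem (Submodule.mem_sup_left hx) (Submodule.mem_sup_right (mulf_sub f x))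

theorem KI_h (R : OspRel h e H f E F) (i) (z) : h i * ww h e H f E F z ∈ KI h e H f E F := by
  obtain ⟨a, t, c, ε⟩ := z
  apply Submodule.mem_sup_left
  have : h i * ww h e H f E F (a, t, c, ε) = ww h e H f E F (a, t + Pi.single i 1, c, ε) := by
    simp only [ww]
    rw [← GG_step h R.hhh]
    have := (show Commute (h i) F from R.hhF i).pow_right (a : ℕ)
    simp only [← mul_assoc]
    rw [this.eq]
  rw [this]
  exact ww_mem _

theorem KI_F (R : OspRel h e H f E F) (z) : F * ww h e H f E F z ∈ KI h e H f E F := by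
  obtain ⟨a, t, c, ε⟩ := z
  fin_cases a
  · apply Submodule.mem_sup_left
    have : F * ww h e H f E F (0, t, c, ε) = ww h e H f E F (1, t, c, ε) := by
      simp [ww, mul_assoc]
    exact this ▸ ww_mem _
  · have : F * ww h e H f E F (1, t, c, ε) = - (ww h e H f E F (0, t, c, ε) * f) := by
      rw [(R.ww_f _).eq]
      simp [ww, mul_assoc, R.hf]
    exact this ▸ neg_mem (R.KI_mulf (ww_mem _))

theorem KI_EP (R : OspRel h e H f E F) (z) :
    EP H f E F * ww h e H f E F z ∈ KI h e H f E F := by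
  obtain ⟨a, t, c, ε⟩ := z
  have h1 : EP H f E F * ww h e H f E F (a, t, c, ε) =
      (-1 : ℂ) ^ (a : ℕ) • (F ^ (a : ℕ) * GG h t * ZZ e H f E F ^ c *
        EP H f E F ^ ((ε : ℕ) + 1)) := by
    have hG : Commute (EP H f E F) (GG h t) := GG_commute _ _ _ (fun i => (R.h_EP i).symm)
    have hZ : Commute (EP H f E F) (ZZ e H f E F ^ c) := R.Z_EP.symm.pow_right c
    have hF : EP H f E F * F ^ (a : ℕ) = (-1 : ℂ) ^ (a : ℕ) • (F ^ (a : ℕ) * EP H f E F) := by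
      fin_cases a
      · simp
      · simp [R.EP_F]
    simp only [ww]
    simp only [← mul_assoc]
    rw [hF, pow_succ']
    simp only [smul_mul_assoc, mul_assoc]
    congr 2
    rw [← mul_assoc, hG.eq, mul_assoc, ← mul_assoc (EP H f E F), hZ.eq, mul_assoc]
  rw [h1]
  apply Submodule.smul_mem
  fin_cases ε
  · apply Submodule.mem_sup_left
    have : F ^ (a : ℕ) * GG h t * ZZ e H f E F ^ c * EP H f E F ^ (0 + 1)
      = ww h e H f E F (a, t, c, 1) := by simp [ww]
    exact this ▸ ww_mem _
  · have : F ^ (a : ℕ) * GG h t * ZZ e H f E F ^ c * EP H f E F ^ (1 + 1)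
      = ((1/2 : ℂ) • ww h e H f E F (a, t, c+1, 0) +
          (1/16 : ℂ) • ww h e H f E F (a, t, c, 0)) * f := by
      simp only [ww, pow_succ, pow_zero, one_mul, R.EP_EP, Fin.val_zero, mul_one]
      simp only [mul_add, add_mul, smul_mul_assoc, mul_smul_comm, one_mul, mul_assoc]
    refine this ▸ R.KI_mulf ?_
    exact add_mem (Submodule.smul_mem _ _ (ww_mem _)) (Submodule.smul_mem _ _ (ww_mem _))

theorem E_eq (R : OspRel h e H f E F) {x : U} (hx : x ∈ KK h e H f E F) :
    E * x - (EP H f E F * x - (1/2 : ℂ) • (H * (F * x)) + (1/4 : ℂ) • (F * x)) ∈ II f := by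
  have h2 : E * x - (EP H f E F * x - (1/2 : ℂ) • (H * (F * x)) + (1/4 : ℂ) • (F * x))
    = - (E * x * f - E * x) := by
    rw [mul_assoc E x f, (R.KK_f hx).eq]
    simp only [EP, R.hHF', sub_mul, add_mul, smul_mul_assoc, mul_assoc]
    module
  rw [h2]
  exact neg_mem (mulf_sub f _)

end OspRel

def XX (h : Fin km → U) (e H f E F : U) : Submodule ℂ U :=
  Submodule.span ℂ {x | ∃ r ∈ Algebra.adjoin ℂ {H}, ∃ k ∈ KI h e H f E F, x = r * k}

namespace OspRel
variable {h : Fin km → U} {e H f E F : U}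

theorem XX_mem {r k : U} (hr : r ∈ Algebra.adjoin ℂ {H}) (hk : k ∈ KI h e H f E F) :
    r * k ∈ XX h e H f E F := Submodule.subset_span ⟨r, hr, k, hk, rfl⟩

theorem XX_adj {r x : U} (hr : r ∈ Algebra.adjoin ℂ {H}) (hx : x ∈ XX h e H f E F) :
    r * x ∈ XX h e H f E F := by
  induction hx using Submodule.span_induction with
  | mem x hx =>
    obtain ⟨s, hs, k, hk, rfl⟩ := hx
    rw [← mul_assoc]; exact XX_mem (mul_mem hr hs) hk
  | zero => simp
  | add x y _ _ hx hy => rw [mul_add]; exact add_mem hx hy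
  | smul c x _ hx => rw [mul_smul_comm]; exact Submodule.smul_mem _ _ hx

theorem H_adj : H ∈ Algebra.adjoin ℂ {H} := Algebra.subset_adjoin rfl

theorem adj_shift {g : U} (c : ℂ) (hg : g * H = (H + c • 1) * g) {r : U}
    (hr : r ∈ Algebra.adjoin ℂ {H}) : ∃ s ∈ Algebra.adjoin ℂ {H}, g * r = s * g := by
  induction hr using Algebra.adjoin_induction with
  | mem x hx =>
    rw [Set.mem_singleton_iff] at hx
    subst hx
    exact ⟨_, add_mem H_adj (Subalgebra.smul_mem _ (one_mem _) c), hg⟩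
  | algebraMap r => exact ⟨_, Subalgebra.algebraMap_mem _ r, (Algebra.commutes r g).symm⟩
  | add x y _ _ hx hy =>
    obtain ⟨s, hs, h1⟩ := hx
    obtain ⟨s', hs', h1'⟩ := hy
    exact ⟨_, add_mem hs hs', by rw [mul_add, add_mul, h1, h1']⟩
  | mul x y _ _ hx hy =>
    obtain ⟨s, hs, h1⟩ := hx
    obtain ⟨s', hs', h1'⟩ := hy
    exact ⟨_, mul_mem hs hs', by rw [← mul_assoc, h1, mul_assoc, h1', mul_assoc]⟩

theorem XX_stable {g : U} (c : ℂ) (hg : g * H = (H + c • 1) * g)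
    (hk : ∀ k ∈ KI h e H f E F, g * k ∈ XX h e H f E F) {x : U}
    (hx : x ∈ XX h e H f E F) : g * x ∈ XX h e H f E F := by
  induction hx using Submodule.span_induction with
  | mem x hx =>
    obtain ⟨s, hs, k, hk', rfl⟩ := hx
    obtain ⟨s', hs', h1⟩ := adj_shift c hg hs
    rw [← mul_assoc, h1, mul_assoc]
    exact XX_adj hs' (hk k hk')
  | zero => simp
  | add x y _ _ hx hy => rw [mul_add]; exact add_mem hx hy
  | smul c x _ hx => rw [mul_smul_comm]; exact Submodule.smul_mem _ _ hx

theorem KI_XX {k : U} (hk : k ∈ KI h e H f E F) : k ∈ XX h e H f E F := by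
  have := XX_mem (one_mem (Algebra.adjoin ℂ {H})) hk
  rwa [one_mul] at this

theorem XX_h (R : OspRel h e H f E F) (i) {x : U} (hx : x ∈ XX h e H f E F) :
    h i * x ∈ XX h e H f E F :=
  XX_stable 0 (by simp [R.hhH]) (fun k hk => KI_XX (KI_stable (R.KI_h i) hk)) hx

theorem XX_F (R : OspRel h e H f E F) {x : U} (hx : x ∈ XX h e H f E F) :
    F * x ∈ XX h e H f E F :=
  XX_stable 1 (by simp [R.hHF, add_mul]) (fun k hk => KI_XX (KI_stable R.KI_F hk)) hx

theorem XX_E (R : OspRel h e H f E F) {x : U} (hx : x ∈ XX h e H f E F) :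
    E * x ∈ XX h e H f E F := by
  refine XX_stable (-1) (by simp [R.hEH, add_mul, sub_eq_add_neg]) (fun k hk => ?_) hx
  obtain ⟨y, hy, i, hi, rfl⟩ := Submodule.mem_sup.1 hk
  have hy' : y ∈ KI h e H f E F := Submodule.mem_sup_left hy
  rw [mul_add]
  refine add_mem ?_ (KI_XX (Submodule.mem_sup_right (II_left _ hi)))
  have h1 := R.E_eq hy
  have hF := KI_XX (KI_stable R.KI_F hy')
  have h2 : EP H f E F * y - (1/2 : ℂ) • (H * (F * y)) + (1/4 : ℂ) • (F * y) ∈ XX h e H f E F :=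
    add_mem (sub_mem (KI_XX (KI_stable R.KI_EP hy'))
      (Submodule.smul_mem _ _ (XX_adj H_adj hF))) (Submodule.smul_mem _ _ hF)
  have h3 := add_mem (KI_XX (Submodule.mem_sup_right h1)) h2
  simpa using h3

theorem XX_top (R : OspRel h e H f E F)
    (htop : Algebra.adjoin ℂ ({E, F} ∪ Set.range h) = ⊤) (u : U) : u ∈ XX h e H f E F := by
  have key : ∀ x ∈ XX h e H f E F, u * x ∈ XX h e H f E F := by
    have hu : u ∈ Algebra.adjoin ℂ ({E, F} ∪ Set.range h) := htop ▸ Algebra.mem_top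
    induction hu using Algebra.adjoin_induction with
    | mem g hg =>
      intro x hx
      rcases hg with (rfl | hg) | ⟨i, rfl⟩
      · exact R.XX_E hx
      · rw [Set.mem_singleton_iff] at hg
        subst hg
        exact R.XX_F hx
      · exact R.XX_h i hx
    | algebraMap r =>
      intro x hx
      rw [← Algebra.smul_def]
      exact Submodule.smul_mem _ _ hx
    | add x y _ _ hx hy => intro z hz; rw [add_mul]; exact add_mem (hx z hz) (hy z hz)
    | mul x y _ _ hx hy => intro z hz; rw [mul_assoc]; exact hx _ (hy z hz)
  have h1 : (1 : U) ∈ XX h e H f E F := by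
    have : ww h e H f E F (0, 0, 0, 0) = 1 := by simp [ww, GG_zero]
    exact KI_XX (Submodule.mem_sup_left (this ▸ ww_mem _))
  simpa using key 1 h1

end OspRel

/-- descending products -/
def RR (H : U) : ℕ → U
  | 0 => 1
  | n + 1 => (H - (2 * n : ℂ) • 1) * RR H n

def AA (h : Fin km → U) (e H f E F : U) : ℕ → Submodule ℂ U
  | 0 => ⊥
  | n + 1 => AA h e H f E F n ⊔ (KK h e H f E F).map (LinearMap.mulLeft ℂ (RR H n))

namespace OspRel
variable {h : Fin km → U} {e H f E F : U}

theorem f_RR (R : OspRel h e H f E F) (n : ℕ) :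
    f * RR H (n+1) = (RR H (n+1) + (2 * (n + 1) : ℂ) • RR H n) * f := by
  induction n with
  | zero =>
    simp [RR, R.f_H]
  | succ n ih =>
    have h1 : f * RR H (n+2) = (H - (2 * n : ℂ) • 1) * (f * RR H (n+1)) := by
      have : f * (H - (2 * ((n+1 : ℕ) : ℂ)) • 1) = (H - (2 * n : ℂ) • 1) * f := by
        simp only [mul_sub, sub_mul, R.f_H, add_mul, mul_smul_comm, smul_mul_assoc, one_mul, mul_one]
        push_cast
        module
      rw [RR, ← mul_assoc, this, mul_assoc]
    rw [h1, ih, ← mul_assoc]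
    congr 1
    have h2 : RR H (n+1+1) = (H - (2 * ((n+1 : ℕ) : ℂ)) • 1) * RR H (n+1) := rfl
    have h3 : RR H (n+1) = (H - (2 * n : ℂ) • 1) * RR H n := rfl
    rw [mul_add, mul_smul_comm, ← h3, h2]
    simp only [sub_mul, smul_mul_assoc, one_mul]
    push_cast
    module

theorem T_RR (R : OspRel h e H f E F) (n : ℕ) {k : U} (hk : k ∈ KK h e H f E F) :
    (f - 1) * (RR H (n+1) * k) - (2 * (n + 1) : ℂ) • (RR H n * k) ∈ II f := by
  have : (f - 1) * (RR H (n+1) * k) - (2 * (n + 1) : ℂ) • (RR H n * k) =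
      ((RR H (n+1) + (2 * (n + 1) : ℂ) • RR H n) * k) * f
        - ((RR H (n+1) + (2 * (n + 1) : ℂ) • RR H n) * k) := by
    rw [sub_mul, ← mul_assoc, R.f_RR, mul_assoc, mul_assoc, (R.KK_f hk).eq]
    simp only [add_mul, smul_mul_assoc, one_mul]
    abel
  rw [this]
  exact mulf_sub _ _

theorem T_K (R : OspRel h e H f E F) {k : U} (hk : k ∈ KK h e H f E F) :
    (f - 1) * k ∈ II f := by
  rw [sub_mul, one_mul, ← (R.KK_f hk).eq]
  exact mulf_sub _ _

theorem T_pow (R : OspRel h e H f E F) (n : ℕ) {k : U} (hk : k ∈ KK h e H f E F) :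
    ∃ c : ℂ, c ≠ 0 ∧ (f - 1) ^ n * (RR H n * k) - c • k ∈ II f := by
  induction n with
  | zero => exact ⟨1, one_ne_zero, by simp [RR]⟩
  | succ n ih =>
    obtain ⟨c, hc, h1⟩ := ih
    refine ⟨(2 * (n + 1) : ℂ) * c, mul_ne_zero (mul_ne_zero two_ne_zero
      (by exact_mod_cast Nat.succ_ne_zero n)) hc, ?_⟩
    have h2 := II_left ((f-1)^n) (R.T_RR n hk)
    have h3 := add_mem h2 (II_smul (2 * (n + 1) : ℂ) h1)
    convert h3 using 1
    rw [pow_succ, mul_assoc, mul_sub, mul_smul_comm, smul_sub, smul_smul]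
    abel

theorem T_AA (R : OspRel h e H f E F) (n : ℕ) {x : U} (hx : x ∈ AA h e H f E F n) :
    (f - 1) ^ n * x ∈ II f := by
  induction n generalizing x with
  | zero =>
    have : x = 0 := by simpa [AA] using hx
    simp [this]
  | succ n ih =>
    obtain ⟨y, hy, z, hz, rfl⟩ := Submodule.mem_sup.1 hx
    obtain ⟨k, hk, rfl⟩ := hz
    rw [mul_add, pow_succ']
    refine add_mem ?_ ?_
    · rw [mul_assoc]; exact II_left _ (ih hy)
    · obtain ⟨c, hc, h1⟩ := R.T_pow n hk
      have h2 := add_mem (II_left (f-1) h1) (II_smul c (R.T_K hk))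
      convert h2 using 1
      rw [mul_sub, mul_smul_comm, LinearMap.mulLeft_apply, mul_assoc]
      abel

theorem inv_AA (R : OspRel h e H f E F) (n : ℕ) {x : U} (hx : x ∈ AA h e H f E F n)
    (hT : (f - 1) * x ∈ II f) : ∃ k ∈ KK h e H f E F, x - k ∈ II f := by
  induction n generalizing x with
  | zero =>
    have : x = 0 := by simpa [AA] using hx
    exact ⟨0, zero_mem _, by simp [this]⟩
  | succ n ih =>
    obtain ⟨y, hy, z, hz, rfl⟩ := Submodule.mem_sup.1 hx
    obtain ⟨k, hk, rfl⟩ := hz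
    rw [LinearMap.mulLeft_apply] at *
    cases n with
    | zero =>
      have : y = 0 := by simpa [AA] using hy
      exact ⟨k, hk, by simp [this, RR]⟩
    | succ n =>
      obtain ⟨c, hc, h1⟩ := R.T_pow (n+1) hk
      have h2 := R.T_AA (n+1) hy
      have h3 := II_left ((f-1)^n) hT
      rw [← mul_assoc, ← pow_succ, mul_add] at h3
      have h4 : c • k ∈ II f := by
        have := sub_mem (sub_mem h3 h2) h1
        convert this using 1
        abel
      have h5 : k ∈ II f := by
        have := II_smul c⁻¹ h4
        rwa [smul_smul, inv_mul_cancel₀ hc, one_smul] at this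
      have h6 := II_left (RR H (n+1)) h5
      have h7 : (f - 1) * y ∈ II f := by
        have := sub_mem hT (II_left (f-1) h6)
        rwa [mul_add, add_sub_cancel_right] at this
      obtain ⟨k', hk', h8⟩ := ih hy h7
      refine ⟨k', hk', ?_⟩
      have := add_mem h8 h6
      convert this using 1
      abel

theorem AA_mono : Monotone (AA h e H f E F) :=
  monotone_nat_of_le_succ (fun n => by rw [AA]; exact le_sup_left)

theorem AA_H (n : ℕ) {x : U} (hx : x ∈ AA h e H f E F n) : H * x ∈ AA h e H f E F (n+1) := by
  induction n generalizing x with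
  | zero =>
    have : x = 0 := by simpa [AA] using hx
    simp [this]
  | succ n ih =>
    obtain ⟨y, hy, z, hz, rfl⟩ := Submodule.mem_sup.1 hx
    obtain ⟨k, hk, rfl⟩ := hz
    rw [mul_add]
    refine add_mem (AA_mono (Nat.le_succ _) (ih hy)) ?_
    have : H * (LinearMap.mulLeft ℂ (RR H n)) k
      = (2 * n : ℂ) • (RR H n * k) + RR H (n+1) * k := by
      simp only [LinearMap.mulLeft_apply, RR, sub_mul, smul_mul_assoc, one_mul, mul_assoc]
      abel
    rw [this]
    refine add_mem (Submodule.smul_mem _ _ (AA_mono (Nat.le_succ _) ?_)) ?_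
    · exact Submodule.mem_sup_right ⟨k, hk, rfl⟩
    · exact Submodule.mem_sup_right ⟨k, hk, rfl⟩

theorem AA_adj {r : U} (hr : r ∈ Algebra.adjoin ℂ {H}) : ∀ n, ∀ x ∈ AA h e H f E F n,
    ∃ m, r * x ∈ AA h e H f E F m := by
  induction hr using Algebra.adjoin_induction with
  | mem g hg =>
    intro n x hx
    rw [Set.mem_singleton_iff] at hg
    subst hg
    exact ⟨_, AA_H n hx⟩
  | algebraMap r =>
    intro n x hx
    rw [← Algebra.smul_def]
    exact ⟨n, Submodule.smul_mem _ _ hx⟩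
  | add x y _ _ hx hy =>
    intro n z hz
    obtain ⟨m, hm⟩ := hx n z hz
    obtain ⟨m', hm'⟩ := hy n z hz
    refine ⟨max m m', ?_⟩
    rw [add_mul]
    exact add_mem (AA_mono (le_max_left _ _) hm) (AA_mono (le_max_right _ _) hm')
  | mul x y _ _ hx hy =>
    intro n z hz
    obtain ⟨m, hm⟩ := hy n z hz
    rw [mul_assoc]
    exact hx m _ hm

theorem XX_AA {x : U} (hx : x ∈ XX h e H f E F) : ∃ n, ∃ y ∈ AA h e H f E F n, x - y ∈ II f := by
  induction hx using Submodule.span_induction with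
  | mem x hx =>
    obtain ⟨r, hr, k, hk, rfl⟩ := hx
    obtain ⟨y, hy, i, hi, rfl⟩ := Submodule.mem_sup.1 hk
    have : y ∈ AA h e H f E F 1 := Submodule.mem_sup_right ⟨y, hy, by simp [RR]⟩
    obtain ⟨n, hn⟩ := AA_adj hr 1 y this
    refine ⟨n, _, hn, ?_⟩
    rw [mul_add, add_sub_cancel_left]
    exact II_left _ hi
  | zero => exact ⟨0, 0, zero_mem _, by simp⟩
  | add x y _ _ hx hy =>
    obtain ⟨n, a, ha, h1⟩ := hx
    obtain ⟨m, b, hb, h2⟩ := hy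
    refine ⟨max n m, a + b, add_mem (AA_mono (le_max_left _ _) ha)
      (AA_mono (le_max_right _ _) hb), ?_⟩
    rw [add_sub_add_comm]
    exact add_mem h1 h2
  | smul c x _ hx =>
    obtain ⟨n, a, ha, h1⟩ := hx
    exact ⟨n, c • a, Submodule.smul_mem _ _ ha, by rw [← smul_sub]; exact II_smul c h1⟩

theorem inv_main (R : OspRel h e H f E F)
    (htop : Algebra.adjoin ℂ ({E, F} ∪ Set.range h) = ⊤) (u : U)
    (hu : f * u - u * f ∈ II f) : ∃ k ∈ KK h e H f E F, u - k ∈ II f := by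
  obtain ⟨n, y, hy, h1⟩ := XX_AA (R.XX_top htop u)
  have h2 : (f - 1) * y ∈ II f := by
    have := sub_mem (add_mem hu (mulf_sub f u)) (II_left (f-1) h1)
    convert this using 1
    noncomm_ring
  obtain ⟨k, hk, h3⟩ := R.inv_AA n hy h2
  refine ⟨k, hk, ?_⟩
  have := add_mem h1 h3
  convert this using 1
  abel

end OspRel

def pbw (h : Fin km → U) (e H f E F : U) (z : ℕ × Fin 2 × (Fin km → ℕ) × ℕ × ℕ × Fin 2) : U :=
  f ^ z.1 * F ^ (z.2.1 : ℕ) * GG h z.2.2.1 *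
          H ^ z.2.2.2.1 * e ^ z.2.2.2.2.1 * E ^ (z.2.2.2.2.2 : ℕ)

def BB (h : Fin km → U) (H f F : U) : Subalgebra ℂ U :=
  Algebra.adjoin ℂ ({f, F, H} ∪ Set.range h)

def LTm (h : Fin km → U) (H f E F : U) (D : ℕ) : Submodule ℂ U :=
  Submodule.span ℂ {x | ∃ b ∈ BB h H f F, ∃ d < D, x = b * E ^ d}

def BS (h : Fin km → U) (H f F : U) : Submodule ℂ U :=
  Submodule.span ℂ (Set.range (fun z : ℕ × Fin 2 × (Fin km → ℕ) × ℕ =>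
    f ^ z.1 * F ^ (z.2.1 : ℕ) * GG h z.2.2.1 * H ^ z.2.2.2))

def adf (f : U) : U →ₗ[ℂ] U := LinearMap.mulLeft ℂ f - LinearMap.mulRight ℂ f

theorem adf_apply (f x : U) : adf f x = f * x - x * f := rfl

theorem adf_mul (f x y : U) : adf f (x * y) = adf f x * y + x * adf f y := by
  simp only [adf_apply]; noncomm_ring

theorem adf_pow_mul (f : U) (N : ℕ) : ∀ (m n : ℕ) (x y : U), m + n = N →
    (adf f ^ m) x = 0 → (adf f ^ n) y = 0 → (adf f ^ N) (x * y) = 0 := by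
  induction N with
  | zero =>
    intro m n x y h hx hy
    obtain ⟨rfl, rfl⟩ : m = 0 ∧ n = 0 := by omega
    have : x = 0 := by simpa using hx
    simp [this]
  | succ N ih =>
    intro m n x y h hx hy
    rcases m with _ | m
    · have : x = 0 := by simpa using hx
      simp [this]
    rcases n with _ | n
    · have : y = 0 := by simpa using hy
      simp [this]
    rw [pow_succ, Module.End.mul_apply, adf_mul, map_add,
      ih m (n+1) _ _ (by omega) (by rw [← Module.End.mul_apply, ← pow_succ]; exact hx) hy,
      ih (m+1) n _ _ (by omega) hx (by rw [← Module.End.mul_apply, ← pow_succ]; exact hy), add_zero]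

namespace OspRel
variable {h : Fin km → U} {e H f E F : U}

theorem adf_nil (R : OspRel h e H f E F)
    (htop : Algebra.adjoin ℂ ({E, F} ∪ Set.range h) = ⊤) (u : U) :
    ∃ N, (adf f ^ N) u = 0 := by
  have mono : ∀ (x : U) (m n : ℕ), m ≤ n → (adf f ^ m) x = 0 → (adf f ^ n) x = 0 := by
    intro x m n hmn hx
    obtain ⟨k, rfl⟩ := Nat.exists_eq_add_of_le' hmn
    rw [pow_add, Module.End.mul_apply, hx, map_zero]
  have hF : adf f F = 0 := by rw [adf_apply, R.f_F, sub_self]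
  have hu : u ∈ Algebra.adjoin ℂ ({E, F} ∪ Set.range h) := htop ▸ Algebra.mem_top
  induction hu using Algebra.adjoin_induction with
  | mem g hg =>
    rcases hg with (rfl | hg) | ⟨i, rfl⟩
    · refine ⟨2, ?_⟩
      have : adf f g = - F := by
        simp only [adf_apply, R.hf, neg_mul, mul_neg, mul_assoc, R.hEF, R.hEF', mul_sub, R.hHF]
        abel
      rw [pow_succ, Module.End.mul_apply, this, pow_one, map_neg, hF, neg_zero]
    · rw [Set.mem_singleton_iff] at hg
      subst hg
      exact ⟨1, by rw [pow_one, hF]⟩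
    · exact ⟨1, by rw [pow_one, adf_apply, (R.f_h i).eq, sub_self]⟩
  | algebraMap r =>
    exact ⟨1, by rw [pow_one, adf_apply, Algebra.commutes, sub_self]⟩
  | add x y _ _ hx hy =>
    obtain ⟨m, hm⟩ := hx
    obtain ⟨n, hn⟩ := hy
    refine ⟨max m n, ?_⟩
    rw [map_add, mono x m _ (le_max_left _ _) hm, mono y n _ (le_max_right _ _) hn, add_zero]
  | mul x y _ _ hx hy =>
    obtain ⟨m, hm⟩ := hx
    obtain ⟨n, hn⟩ := hy
    exact ⟨m + n, adf_pow_mul f _ m n x y rfl hm hn⟩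

theorem reg_right (R : OspRel h e H f E F)
    (htop : Algebra.adjoin ℂ ({E, F} ∪ Set.range h) = ⊤)
    (hreg : ∀ v : U, (f - 1) * v = 0 → v = 0) (v : U) (hv : v * (f - 1) = 0) : v = 0 := by
  obtain ⟨N, hN⟩ := R.adf_nil htop v
  have hvf : v * f = v := by rwa [mul_sub, mul_one, sub_eq_zero] at hv
  have h1 : ∀ n, (adf f ^ n) v = (f - 1) ^ n * v := by
    intro n
    induction n with
    | zero => simp
    | succ n ih =>
      rw [pow_succ', Module.End.mul_apply, ih, adf_apply, mul_assoc ((f-1)^n), hvf, pow_succ']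
      noncomm_ring
  have h2 : ∀ n, (f - 1) ^ n * v = 0 → v = 0 := by
    intro n
    induction n with
    | zero => simp
    | succ n ih =>
      intro h
      rw [pow_succ', mul_assoc] at h
      exact ih (hreg _ h)
  exact h2 N (by rw [← h1, hN])

theorem comm_II (R : OspRel h e H f E F)
    (htop : Algebra.adjoin ℂ ({E, F} ∪ Set.range h) = ⊤)
    (hreg : ∀ v : U, (f - 1) * v = 0 → v = 0) {x : U} (hx : x ∈ II f) (hc : Commute x f) :
    ∃ u, x = (f - 1) * u := by
  obtain ⟨u, rfl⟩ := mem_II.1 hx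
  refine ⟨u, ?_⟩
  have h1 : (f * u - u * f) * (f - 1) = 0 := by
    have : f * (u * (f-1)) - u * (f-1) * f = 0 := by rw [hc.eq, sub_self]
    rw [← this]; noncomm_ring
  have h2 := R.reg_right htop hreg _ h1
  rw [sub_eq_zero] at h2
  rw [mul_sub, sub_mul, h2, mul_one, one_mul]

theorem f_pbw (n : ℕ) (z) : f * pbw h e H f E F (n, z) = pbw h e H f E F (n+1, z) := by
  simp only [pbw, pow_succ', mul_assoc]

theorem reg_left (b : Module.Basis (ℕ × Fin 2 × (Fin km → ℕ) × ℕ × ℕ × Fin 2) ℂ U)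
    (hb : ∀ z, b z = pbw h e H f E F z) (v : U) (hv : (f - 1) * v = 0) : v = 0 := by
  have hfv : f * v = v := by rwa [sub_mul, one_mul, sub_eq_zero] at hv
  have h0 : ∀ z, b.coord (0, z) ∘ₗ LinearMap.mulLeft ℂ f = 0 := by
    intro z
    refine b.ext fun w => ?_
    obtain ⟨n, w⟩ := w
    simp only [LinearMap.comp_apply, LinearMap.mulLeft_apply, hb, f_pbw]
    rw [← hb, Module.Basis.coord_apply, b.repr_self, Finsupp.single_apply]
    simp
  have h1 : ∀ n z, b.coord (n+1, z) ∘ₗ LinearMap.mulLeft ℂ f = b.coord (n, z) := by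
    intro n z
    refine b.ext fun w => ?_
    obtain ⟨m, w⟩ := w
    simp only [LinearMap.comp_apply, LinearMap.mulLeft_apply, hb, f_pbw]
    rw [← hb, ← hb, Module.Basis.coord_apply, Module.Basis.coord_apply, b.repr_self, b.repr_self,
      Finsupp.single_apply, Finsupp.single_apply]
    simp
  have h2 : ∀ n z, b.coord (n, z) v = 0 := by
    intro n
    induction n with
    | zero =>
      intro z
      have := LinearMap.congr_fun (h0 z) v
      simpa only [LinearMap.comp_apply, LinearMap.mulLeft_apply, hfv, LinearMap.zero_apply] using this
    | succ n ih =>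
      intro z
      have := LinearMap.congr_fun (h1 n z) v
      rw [ih z] at this
      simpa only [LinearMap.comp_apply, LinearMap.mulLeft_apply, hfv] using this
  apply b.repr.injective
  ext ⟨n, z⟩
  simpa using h2 n z

theorem BB_f : f ∈ BB h H f F := Algebra.subset_adjoin (Or.inl (by simp))
theorem BB_F : F ∈ BB h H f F := Algebra.subset_adjoin (Or.inl (by simp))
theorem BB_H : H ∈ BB h H f F := Algebra.subset_adjoin (Or.inl (by simp))
theorem BB_h (i) : h i ∈ BB h H f F := Algebra.subset_adjoin (Or.inr ⟨i, rfl⟩)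
theorem BB_G (t) : GG h t ∈ BB h H f F := by
  unfold GG ringProd
  apply list_prod_mem
  intro y hy
  rw [List.mem_ofFn] at hy
  obtain ⟨i, rfl⟩ := hy
  exact pow_mem (BB_h i) _

theorem H_fpow (R : OspRel h e H f E F) (n : ℕ) :
    H * f ^ n = f ^ n * H - (2 * n : ℂ) • f ^ n := by
  have h1 : H * f = f * H - (2 : ℂ) • f := by
    rw [R.f_H, add_mul, smul_mul_assoc, one_mul]; abel
  induction n with
  | zero => simp
  | succ n ih =>
    rw [pow_succ, ← mul_assoc, ih, sub_mul, mul_assoc, h1, smul_mul_assoc, mul_sub, mul_assoc,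
      mul_smul_comm]
    push_cast
    module

theorem H_Fpow (R : OspRel h e H f E F) (n : ℕ) :
    H * F ^ n = F ^ n * H - (n : ℂ) • F ^ n := by
  induction n with
  | zero => simp
  | succ n ih =>
    rw [pow_succ, ← mul_assoc, ih, sub_mul, mul_assoc, R.hHF, smul_mul_assoc, mul_sub, mul_assoc]
    push_cast
    module

theorem BS_mem (z : ℕ × Fin 2 × (Fin km → ℕ) × ℕ) :
    f ^ z.1 * F ^ (z.2.1 : ℕ) * GG h z.2.2.1 * H ^ z.2.2.2 ∈ BS h H f F :=
  Submodule.subset_span ⟨z, rfl⟩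

theorem BS_gen (R : OspRel h e H f E F) {g : U} (hg : g ∈ ({f, F, H} ∪ Set.range h : Set U))
    (z : ℕ × Fin 2 × (Fin km → ℕ) × ℕ) :
    g * (f ^ z.1 * F ^ (z.2.1 : ℕ) * GG h z.2.2.1 * H ^ z.2.2.2) ∈ BS h H f F := by
  obtain ⟨n, a, t, b⟩ := z
  have hFf : Commute F f := R.f_F.symm
  rcases hg with hg | ⟨i, rfl⟩
  · simp only [Set.mem_insert_iff, Set.mem_singleton_iff] at hg
    rcases hg with rfl | rfl | rfl
    · have := BS_mem (h := h) (H := H) (f := g) (F := F) (n+1, a, t, b)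
      convert this using 1
      simp only [pow_succ', mul_assoc]
    · fin_cases a
      · have := BS_mem (h := h) (H := H) (f := f) (F := g) (n, 1, t, b)
        convert this using 1
        simp only [Fin.zero_eta, Fin.val_zero, pow_zero, mul_one, Fin.val_one, pow_one, ← mul_assoc]
        rw [(hFf.pow_right n).eq]
      · have := neg_mem (BS_mem (h := h) (H := H) (f := f) (F := g) (n+1, 0, t, b))
        convert this using 1
        simp only [Fin.mk_one, Fin.val_zero, pow_zero, mul_one, Fin.val_one, pow_one, ← mul_assoc]
        rw [(hFf.pow_right n).eq, mul_assoc _ g g, pow_succ]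
        conv_rhs => rw [R.hf]
        simp only [mul_neg, neg_mul, neg_neg]
        rw [← R.hf]
    · have h1 := BS_mem (h := h) (H := g) (f := f) (F := F) (n, a, t, b+1)
      have h2 := BS_mem (h := h) (H := g) (f := f) (F := F) (n, a, t, b)
      have h3 := sub_mem h1 (Submodule.smul_mem _ ((2 * n : ℂ) + (a : ℕ)) h2)
      convert h3 using 1
      have hG : g * GG h t = GG h t * g := (GG_commute _ _ _ (fun i => (R.hhH i).symm)).eq
      simp only [← mul_assoc]
      rw [R.H_fpow, sub_mul, mul_assoc _ g, R.H_Fpow]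
      simp only [mul_sub, sub_mul, smul_mul_assoc, mul_smul_comm, mul_assoc]
      rw [← mul_assoc g (GG h t), hG, mul_assoc, ← pow_succ']
      module
  · have := BS_mem (h := h) (H := H) (f := f) (F := F) (n, a, t + Pi.single i 1, b)
    convert this using 1
    simp only
    rw [← GG_step h R.hhh]
    simp only [← mul_assoc]
    rw [((R.f_h i).pow_right n).eq, mul_assoc _ (h i),
      ((show Commute (h i) F from R.hhF i).pow_right _).eq]
    simp only [mul_assoc]

theorem BB_BS (R : OspRel h e H f E F) {x : U} (hx : x ∈ BB h H f F) : x ∈ BS h H f F := by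
  have key : ∀ y ∈ BS h H f F, x * y ∈ BS h H f F := by
    induction hx using Algebra.adjoin_induction with
    | mem g hg =>
      intro y hy
      induction hy using Submodule.span_induction with
      | mem x hx => obtain ⟨z, rfl⟩ := hx; exact R.BS_gen hg z
      | zero => simp
      | add x y _ _ hx hy => rw [mul_add]; exact add_mem hx hy
      | smul c x _ hx => rw [mul_smul_comm]; exact Submodule.smul_mem _ _ hx
    | algebraMap r =>
      intro x hx
      rw [← Algebra.smul_def]
      exact Submodule.smul_mem _ _ hx
    | add x y _ _ hx hy => intro z hz; rw [add_mul]; exact add_mem (hx z hz) (hy z hz)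
    | mul x y _ _ hx hy => intro z hz; rw [mul_assoc]; exact hx _ (hy z hz)
  have h1 := BS_mem (h := h) (H := H) (f := f) (F := F) (0, 0, 0, 0)
  simpa [GG_zero] using key _ h1

theorem LT_mem {b : U} (hb : b ∈ BB h H f F) {d D : ℕ} (hd : d < D) :
    b * E ^ d ∈ LTm h H f E F D := Submodule.subset_span ⟨b, hb, d, hd, rfl⟩

theorem LT_mono {D D' : ℕ} (hD : D ≤ D') : LTm h H f E F D ≤ LTm h H f E F D' := by
  apply Submodule.span_mono
  rintro x ⟨b, hb, d, hd, rfl⟩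
  exact ⟨b, hb, d, by omega, rfl⟩

theorem LT_B {b x : U} {D : ℕ} (hb : b ∈ BB h H f F) (hx : x ∈ LTm h H f E F D) :
    b * x ∈ LTm h H f E F D := by
  induction hx using Submodule.span_induction with
  | mem x hx =>
    obtain ⟨b', hb', d, hd, rfl⟩ := hx
    rw [← mul_assoc]
    exact LT_mem (mul_mem hb hb') hd
  | zero => simp
  | add x y _ _ hx hy => rw [mul_add]; exact add_mem hx hy
  | smul c x _ hx => rw [mul_smul_comm]; exact Submodule.smul_mem _ _ hx

theorem LT_E {x : U} {D : ℕ} (hx : x ∈ LTm h H f E F D) :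
    x * E ∈ LTm h H f E F (D+1) := by
  induction hx using Submodule.span_induction with
  | mem x hx =>
    obtain ⟨b', hb', d, hd, rfl⟩ := hx
    rw [mul_assoc, ← pow_succ]
    exact LT_mem hb' (by omega)
  | zero => simp
  | add x y _ _ hx hy => rw [add_mul]; exact add_mem hx hy
  | smul c x _ hx => rw [smul_mul_assoc]; exact Submodule.smul_mem _ _ hx

theorem Z_BB (R : OspRel h e H f E F) {b : U} (hb : b ∈ BB h H f F) :
    Commute (ZZ e H f E F) b := by
  induction hb using Algebra.adjoin_induction with
  | mem g hg =>
    rcases hg with hg | ⟨i, rfl⟩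
    · simp only [Set.mem_insert_iff, Set.mem_singleton_iff] at hg
      rcases hg with rfl | rfl | rfl
      · exact R.Z_f
      · exact R.Z_F
      · exact R.Z_H
    · exact (R.h_Z i).symm
  | algebraMap r => exact (Algebra.commutes r _).symm
  | add x y _ _ hx hy => exact hx.add_right hy
  | mul x y _ _ hx hy => exact hx.mul_right hy

theorem Z_Epow (R : OspRel h e H f E F) (d : ℕ) :
    ZZ e H f E F * E ^ d - (2 : ℂ) • (f * E ^ (d+2)) ∈ LTm h H f E F (d+2) := by
  have : ZZ e H f E F * E ^ d - (2 : ℂ) • (f * E ^ (d+2)) =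
      ((1/2 : ℂ) • (H * H) + (1/2 : ℂ) • H) * E ^ d + F * E ^ (d+1) := by
    simp only [ZZ, add_mul, smul_mul_assoc, R.he, pow_succ', mul_assoc]
    module
  rw [this]
  refine add_mem (LT_mem ?_ (by omega)) (LT_mem BB_F (by omega))
  exact add_mem (Subalgebra.smul_mem _ (mul_mem BB_H BB_H) _) (Subalgebra.smul_mem _ BB_H _)

theorem Z_LT (R : OspRel h e H f E F) {D : ℕ} {x : U} (hx : x ∈ LTm h H f E F D) :
    ZZ e H f E F * x ∈ LTm h H f E F (D+2) := by
  induction hx using Submodule.span_induction with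
  | mem x hx =>
    obtain ⟨b', hb', d, hd, rfl⟩ := hx
    rw [← mul_assoc, (R.Z_BB hb').eq, mul_assoc]
    refine LT_B hb' ?_
    have h1 := LT_mono (show d + 2 ≤ D + 2 by omega) (R.Z_Epow d)
    have h2 : (2 : ℂ) • (f * E ^ (d+2)) ∈ LTm h H f E F (D+2) :=
      Submodule.smul_mem _ _ (LT_mem BB_f (by omega))
    simpa using add_mem h1 h2
  | zero => simp
  | add x y _ _ hx hy => rw [mul_add]; exact add_mem hx hy
  | smul c x _ hx => rw [mul_smul_comm]; exact Submodule.smul_mem _ _ hx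

theorem Z_lead (R : OspRel h e H f E F) (c : ℕ) :
    ZZ e H f E F ^ c - (2 : ℂ) ^ c • (f ^ c * E ^ (2 * c)) ∈ LTm h H f E F (2 * c) := by
  induction c with
  | zero => simp
  | succ c ih =>
    have h1 := R.Z_LT ih
    have h2 := Submodule.smul_mem _ ((2 : ℂ)^c) (LT_B (pow_mem BB_f c) (R.Z_Epow (2*c)))
    have h3 := add_mem h1 h2
    convert h3 using 1
    rw [show 2 * (c+1) = 2 * c + 2 by ring]
    rw [mul_sub, mul_sub, ← pow_succ', mul_smul_comm, mul_smul_comm, ← mul_assoc (ZZ e H f E F),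
      (R.Z_f.pow_right c).eq, mul_assoc, smul_sub, smul_smul, pow_succ f, mul_assoc,
      pow_succ (2:ℂ)]
    abel

theorem ww_lead (R : OspRel h e H f E F) (a t c) (ε : Fin 2) :
    ww h e H f E F (a, t, c, ε) - (2 : ℂ) ^ c •
      pbw h e H f E F (c + (ε : ℕ), a, t, 0, c, ε) ∈ LTm h H f E F (2 * c + (ε : ℕ)) := by
  have hG : GG h t * f ^ c = f ^ c * GG h t :=
    ((GG_commute h t f (fun i => (R.f_h i).symm)).pow_left c).symm.eq
  have hG1 : GG h t * f = f * GG h t := ((GG_commute h t f (fun i => (R.f_h i).symm))).symm.eq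
  have hF : F ^ (a : ℕ) * f ^ c = f ^ c * F ^ (a : ℕ) :=
    (Commute.pow_pow (show Commute F f from R.f_F.symm) _ _).eq
  have hF1 : F ^ (a : ℕ) * f = f * F ^ (a : ℕ) :=
    (Commute.pow_left (show Commute F f from R.f_F.symm) _).eq
  have hB : F ^ (a : ℕ) * GG h t ∈ BB h H f F := mul_mem (pow_mem BB_F _) (BB_G t)
  have hcm : F ^ (a : ℕ) * GG h t * f ^ c = f ^ c * (F ^ (a : ℕ) * GG h t) := by
    rw [mul_assoc, hG, ← mul_assoc, hF, mul_assoc]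
  have hcm1 : F ^ (a : ℕ) * GG h t * f = f * (F ^ (a : ℕ) * GG h t) := by
    rw [mul_assoc, hG1, ← mul_assoc, hF1, mul_assoc]
  have he : e ^ c = E ^ (2 * c) := by rw [R.he, pow_mul, pow_two]
  obtain rfl | rfl : ε = 0 ∨ ε = 1 := by omega
  · have h1 := LT_B hB (R.Z_lead c)
    rw [Fin.val_zero, add_zero, add_zero]
    convert h1 using 1
    simp only [ww, pbw, Fin.zero_eta, Fin.val_zero, pow_zero, mul_one, add_zero, he]
    rw [mul_sub, mul_smul_comm, ← mul_assoc _ (f ^ c), hcm]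
    simp only [mul_assoc]
  · have h1 := LT_B hB (LT_B BB_f (LT_E (R.Z_lead c)))
    have h2 : ZZ e H f E F ^ c ∈ LTm h H f E F (2*c+1) := by
      have h3 : (2 : ℂ) ^ c • (f ^ c * E ^ (2 * c)) ∈ LTm h H f E F (2*c+1) :=
        Submodule.smul_mem _ _ (LT_mem (pow_mem BB_f c) (by omega))
      simpa using add_mem (LT_mono (Nat.le_succ _) (R.Z_lead c)) h3
    have hb : F * ((1/2 : ℂ) • H + (1/4 : ℂ) • 1) ∈ BB h H f F :=
      mul_mem BB_F (add_mem (Subalgebra.smul_mem _ BB_H _) (Subalgebra.smul_mem _ (one_mem _) _))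
    have h4 := LT_B hB (LT_B hb h2)
    have h5 := add_mem h1 h4
    rw [Fin.val_one]
    convert h5 using 1
    simp only [ww, pbw, Fin.mk_one, Fin.val_one, pow_one, pow_zero, mul_one, he]
    rw [mul_assoc _ (_ ^ c), (R.Z_EP.pow_left c).eq, R.EP_eq, add_mul, mul_add,
      mul_assoc f E, ← (R.Z_E.pow_left c).eq, sub_mul, mul_sub, mul_sub]
    have : F ^ (a : ℕ) * GG h t * (f * ((2:ℂ) ^ c • (f ^ c * E ^ (2*c)) * E))
        = (2:ℂ)^c • (f ^ (c+1) * F ^ (a : ℕ) * GG h t * E ^ (2*c) * E) := by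
      simp only [smul_mul_assoc, mul_smul_comm]
      congr 1
      rw [← mul_assoc _ f, hcm1, mul_assoc f, mul_assoc (f ^ c), ← mul_assoc _ (f ^ c), hcm,
        pow_succ']
      simp only [mul_assoc]
    rw [this]
    abel

open Classical in
theorem indep (R : OspRel h e H f E F)
    (htop : Algebra.adjoin ℂ ({E, F} ∪ Set.range h) = ⊤)
    (b : Module.Basis (ℕ × Fin 2 × (Fin km → ℕ) × ℕ × ℕ × Fin 2) ℂ U)
    (hb : ∀ z, b z = pbw h e H f E F z)
    (s : Finset (Fin 2 × (Fin km → ℕ) × ℕ × Fin 2))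
    (g : Fin 2 × (Fin km → ℕ) × ℕ × Fin 2 → ℂ)
    (hs : ∑ i ∈ s, g i • ww h e H f E F i ∈ II f) : ∀ i ∈ s, g i = 0 := by
  let lam : Fin 2 × (Fin km → ℕ) × ℕ × Fin 2 → U →ₗ[ℂ] ℂ := fun j =>
    b.constr ℂ (fun z => if z.2 = (j.1, j.2.1, 0, j.2.2.1, j.2.2.2) then (1:ℂ) else 0)
  have hlam : ∀ j z, lam j (pbw h e H f E F z) =
      if z.2 = (j.1, j.2.1, 0, j.2.2.1, j.2.2.2) then (1:ℂ) else 0 := by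
    intro j z
    rw [← hb]
    exact b.constr_basis ℂ _ z
  have hlamf : ∀ j x, lam j (f * x) = lam j x := by
    intro j x
    have : lam j ∘ₗ LinearMap.mulLeft ℂ f = lam j := by
      refine b.ext fun w => ?_
      obtain ⟨n, w⟩ := w
      simp only [LinearMap.comp_apply, LinearMap.mulLeft_apply, hb, f_pbw, hlam]
    exact LinearMap.congr_fun this x
  have hLT : ∀ j : Fin 2 × (Fin km → ℕ) × ℕ × Fin 2,
      ∀ x ∈ LTm h H f E F (2 * j.2.2.1 + (j.2.2.2 : ℕ)), lam j x = 0 := by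
    intro j x hx
    induction hx using Submodule.span_induction with
    | mem x hx =>
      obtain ⟨y, hy, d, hd, rfl⟩ := hx
      have hy' := R.BB_BS hy
      clear hy
      induction hy' using Submodule.span_induction with
      | mem x hx =>
        obtain ⟨⟨n, a, t, m⟩, rfl⟩ := hx
        have : f ^ n * F ^ (a : ℕ) * GG h t * H ^ m * E ^ d =
            pbw h e H f E F (n, a, t, m, d / 2, ⟨d % 2, Nat.mod_lt _ (by norm_num)⟩) := by
          simp only [pbw, mul_assoc]
          congr 4
          conv_lhs => rw [← Nat.div_add_mod d 2]
          rw [pow_add, pow_mul, R.he, pow_two]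
        simp only [this, hlam]
        rw [if_neg]
        intro heq
        simp only [Prod.mk.injEq] at heq
        obtain ⟨-, -, -, h1, h2⟩ := heq
        have h3 : d % 2 = (j.2.2.2 : ℕ) := by rw [← h2]
        omega
      | zero => simp
      | add x y _ _ hx hy => rw [add_mul, map_add, hx, hy, add_zero]
      | smul c x _ hx => rw [smul_mul_assoc, map_smul, hx, smul_zero]
    | zero => simp
    | add x y _ _ hx hy => rw [map_add, hx, hy, add_zero]
    | smul c x _ hx => rw [map_smul, hx, smul_zero]
  have hww : ∀ i j : Fin 2 × (Fin km → ℕ) × ℕ × Fin 2,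
      2 * i.2.2.1 + (i.2.2.2 : ℕ) ≤ 2 * j.2.2.1 + (j.2.2.2 : ℕ) →
      lam j (ww h e H f E F i) = if i = j then (2:ℂ) ^ j.2.2.1 else 0 := by
    intro i j hij
    obtain ⟨a, t, c, ε⟩ := i
    have h1 := hLT j _ (LT_mono hij (R.ww_lead a t c ε))
    rw [map_sub, sub_eq_zero, map_smul, hlam] at h1
    rw [h1]
    obtain ⟨a', t', c', ε'⟩ := j
    by_cases heq : (a, t, c, ε) = (a', t', c', ε')
    · rw [if_pos heq, if_pos]
      · simp only [Prod.mk.injEq] at heq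
        simp [heq]
      · simp only [Prod.mk.injEq] at heq
        simp [heq]
    · rw [if_neg heq, if_neg]
      · simp
      · simpa only [Prod.mk.injEq, true_and] using heq
  have hreg := reg_left b hb
  have hP : Commute (∑ i ∈ s, g i • ww h e H f E F i) f :=
    Commute.sum_left _ _ _ (fun i _ => (R.ww_f i).smul_left _)
  obtain ⟨u, hu⟩ := R.comm_II htop hreg hs hP
  have hzero : ∀ j, lam j (∑ i ∈ s, g i • ww h e H f E F i) = 0 := by
    intro j
    rw [hu, sub_mul, map_sub, hlamf, one_mul, sub_self]
  by_contra hne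
  push Not at hne
  obtain ⟨i0, hi0, hg0⟩ := hne
  obtain ⟨j, hj, hmax⟩ := (s.filter (fun i => g i ≠ 0)).exists_max_image
    (fun i => 2 * i.2.2.1 + (i.2.2.2 : ℕ)) ⟨i0, by simp [hi0, hg0]⟩
  rw [Finset.mem_filter] at hj
  have h1 := hzero j
  rw [map_sum, Finset.sum_eq_single j] at h1
  · rw [map_smul, hww j j le_rfl, if_pos rfl, smul_eq_mul] at h1
    exact (mul_ne_zero hj.2 (pow_ne_zero _ two_ne_zero)) h1
  · intro i hi hij
    rw [map_smul]
    by_cases hgi : g i = 0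
    · rw [hgi, zero_smul]
    · rw [hww i j (hmax i (by simp [hi, hgi])), if_neg hij, smul_zero]
  · intro hn
    exact absurd hj.1 hn

end OspRel

end helpers

theorem stmt14_presentation_of_Ug0e
    (km : ℕ)
    -- U(g₀), the enveloping superalgebra of g₀ = h^e ⊕ s_θ, s_θ ≅ osp(1|2):
    -- ιh i, ιe, ιH, ιf, ιE, ιF are the images of the basis h_1,…,h_{k−1} of
    -- h^e and of e, h, f, E = [√−2·v_{(r+1)/2}, e], F = √−2·v_{(r+1)/2}
    (Ug0 : Type) [Ring Ug0] [Algebra ℂ Ug0]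
    (ιh : Fin km → Ug0) (ιe ιH ιf ιE ιF : Ug0)
    -- the osp(1|2)-relations of Lemma `osp12genecom`
    (hhe : ιH * ιe - ιe * ιH = (2 : ℂ) • ιe)
    (hhf : ιH * ιf - ιf * ιH = (-2 : ℂ) • ιf)
    (hef : ιe * ιf - ιf * ιe = ιH)
    (hhE : ιH * ιE - ιE * ιH = ιE)
    (hhF : ιH * ιF - ιF * ιH = - ιF)
    (heE : ιe * ιE - ιE * ιe = 0)
    (heF : ιe * ιF - ιF * ιe = - ιE)
    (hfE : ιf * ιE - ιE * ιf = - ιF)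
    (hfF : ιf * ιF - ιF * ιf = 0)
    (hEE : ιE * ιE + ιE * ιE = (2 : ℂ) • ιe)
    (hEF : ιE * ιF + ιF * ιE = ιH)
    (hFF : ιF * ιF + ιF * ιF = (-2 : ℂ) • ιf)
    -- h^e is central in g₀
    (hcen : ∀ i, ιh i * ιe = ιe * ιh i ∧ ιh i * ιH = ιH * ιh i ∧
      ιh i * ιf = ιf * ιh i ∧ ιh i * ιE = ιE * ιh i ∧ ιh i * ιF = ιF * ιh i ∧
      ∀ j, ιh i * ιh j = ιh j * ιh i)
    -- the PBW theorem for U(g₀)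
    (hPBWindep : LinearIndependent ℂ
      (fun z : ℕ × Fin 2 × (Fin km → ℕ) × ℕ × ℕ × Fin 2 =>
        ιf ^ z.1 * ιF ^ (z.2.1 : ℕ) * ringProd (fun i => ιh i ^ z.2.2.1 i) *
          ιH ^ z.2.2.2.1 * ιe ^ z.2.2.2.2.1 * ιE ^ (z.2.2.2.2.2 : ℕ)))
    (hPBWspan : Submodule.span ℂ (Set.range
      (fun z : ℕ × Fin 2 × (Fin km → ℕ) × ℕ × ℕ × Fin 2 =>
        ιf ^ z.1 * ιF ^ (z.2.1 : ℕ) * ringProd (fun i => ιh i ^ z.2.2.1 i) *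
          ιH ^ z.2.2.2.1 * ιe ^ z.2.2.2.2.1 * ιE ^ (z.2.2.2.2.2 : ℕ))) = ⊤)
    -- the left ideal (I₀)_χ and the invariants U(g₀,e) ⊆ (Q₀)_χ
    (I0 : Submodule Ug0 Ug0) (hI0 : I0 = Submodule.span Ug0 {ιf - 1})
    (Inv : Set (Ug0 ⧸ I0))
    (hInv : Inv = {q : Ug0 ⧸ I0 | ∃ y : Ug0,
      (Submodule.Quotient.mk y : Ug0 ⧸ I0) = q ∧ ιf * y - y * ιf ∈ I0})
    -- representatives of the generators Θ′_{h_i}, Θ′_E, C′_θ, Θ′_F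
    (yE yC yF : Ug0)
    (hyE : yE = ιE + (1/2 : ℂ) • (ιF * ιH) - (3/4 : ℂ) • ιF)
    (hyC : yC = (2 : ℂ) • ιe + (1/2 : ℂ) • (ιH * ιH) - (3/2 : ℂ) • ιH + ιF * ιE)
    (hyF : yF = ιF) :
    -- (a) the four families of elements are ad f-invariant, i.e. define
    --     elements of U(g₀,e)
    ((∀ i, ιf * ιh i - ιh i * ιf ∈ I0) ∧ (ιf * yE - yE * ιf ∈ I0) ∧
      (ιf * yC - yC * ιf ∈ I0) ∧ (ιf * yF - yF * ιf ∈ I0))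
    ∧
    -- (b) the relations: [Θ′_E,Θ′_E] = C′_θ + 1/8, [Θ′_F,Θ′_F] = −2, and all
    --     other commutators between the generators vanish
    ((Submodule.Quotient.mk (yE * yE + yE * yE) : Ug0 ⧸ I0) =
        Submodule.Quotient.mk (yC + (1/8 : ℂ) • 1) ∧
      (Submodule.Quotient.mk (yF * yF + yF * yF) : Ug0 ⧸ I0) =
        Submodule.Quotient.mk ((-2 : ℂ) • 1) ∧
      (∀ i j, (Submodule.Quotient.mk (ιh i * ιh j - ιh j * ιh i) : Ug0 ⧸ I0) = 0) ∧
      (∀ i, (Submodule.Quotient.mk (ιh i * yE - yE * ιh i) : Ug0 ⧸ I0) = 0) ∧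
      (∀ i, (Submodule.Quotient.mk (ιh i * yC - yC * ιh i) : Ug0 ⧸ I0) = 0) ∧
      (∀ i, (Submodule.Quotient.mk (ιh i * yF - yF * ιh i) : Ug0 ⧸ I0) = 0) ∧
      ((Submodule.Quotient.mk (yC * yE - yE * yC) : Ug0 ⧸ I0) = 0) ∧
      ((Submodule.Quotient.mk (yC * yF - yF * yC) : Ug0 ⧸ I0) = 0) ∧
      ((Submodule.Quotient.mk (yE * yF + yF * yE) : Ug0 ⧸ I0) = 0))
    ∧
    -- (c) generation subject to the relations: the PBW monomials
    --     Θ′_F^{ι}·∏Θ′_{h_i}^{t_i}·C′_θ^{t_k}·Θ′_E^{ε} form a ℂ-basis of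
    --     U(g₀,e)
    (LinearIndependent ℂ
        (fun z : Fin 2 × (Fin km → ℕ) × ℕ × Fin 2 =>
          (Submodule.Quotient.mk
            (yF ^ (z.1 : ℕ) * ringProd (fun i => ιh i ^ z.2.1 i) *
              yC ^ z.2.2.1 * yE ^ (z.2.2.2 : ℕ)) : Ug0 ⧸ I0)) ∧
      Inv = (Submodule.span ℂ (Set.range
        (fun z : Fin 2 × (Fin km → ℕ) × ℕ × Fin 2 =>
          (Submodule.Quotient.mk
            (yF ^ (z.1 : ℕ) * ringProd (fun i => ιh i ^ z.2.1 i) *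
              yC ^ z.2.2.1 * yE ^ (z.2.2.2 : ℕ)) : Ug0 ⧸ I0))) :
        Set (Ug0 ⧸ I0))) := by
  have hfe : ιe = ιE * ιE := by
    have : (2:ℂ) • (ιE * ιE) = (2:ℂ) • ιe := by rw [two_smul]; exact hEE
    exact (smul_right_injective Ug0 (two_ne_zero (α := ℂ)) this).symm
  have hff : ιf = -(ιF * ιF) := by
    have : (2:ℂ) • (-(ιF * ιF)) = (2:ℂ) • ιf := by
      rw [smul_neg, two_smul ℂ (ιF * ιF), hFF, neg_smul, neg_neg]
    exact (smul_right_injective Ug0 (two_ne_zero (α := ℂ)) this).symm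
  have R : OspRel ιh ιe ιH ιf ιE ιF :=
    { he := hfe
      hf := hff
      hEF := eq_sub_of_add_eq hEF
      hHF := by rw [sub_eq_iff_eq_add] at hhF; rw [hhF]; abel
      hEH := by rw [sub_eq_iff_eq_add] at hhE; rw [hhE]; abel
      hhE := fun i => (hcen i).2.2.2.1
      hhF := fun i => (hcen i).2.2.2.2.1
      hhH := fun i => (hcen i).2.1
      hhh := fun i => (hcen i).2.2.2.2.2 }
  have htop : Algebra.adjoin ℂ ({ιE, ιF} ∪ Set.range ιh) = ⊤ := by
    have mE : ιE ∈ Algebra.adjoin ℂ ({ιE, ιF} ∪ Set.range ιh) :=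
      Algebra.subset_adjoin (Or.inl (by simp))
    have mF : ιF ∈ Algebra.adjoin ℂ ({ιE, ιF} ∪ Set.range ιh) :=
      Algebra.subset_adjoin (Or.inl (by simp))
    have mh : ∀ i, ιh i ∈ Algebra.adjoin ℂ ({ιE, ιF} ∪ Set.range ιh) := fun i =>
      Algebra.subset_adjoin (Or.inr ⟨i, rfl⟩)
    have me : ιe ∈ Algebra.adjoin ℂ ({ιE, ιF} ∪ Set.range ιh) := by
      rw [hfe]; exact mul_mem mE mE
    have mf : ιf ∈ Algebra.adjoin ℂ ({ιE, ιF} ∪ Set.range ιh) := by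
      rw [hff]; exact neg_mem (mul_mem mF mF)
    have mH : ιH ∈ Algebra.adjoin ℂ ({ιE, ιF} ∪ Set.range ιh) := by
      rw [← hEF]; exact add_mem (mul_mem mE mF) (mul_mem mF mE)
    have mG : ∀ t : Fin km → ℕ, ringProd (fun i => ιh i ^ t i) ∈
        Algebra.adjoin ℂ ({ιE, ιF} ∪ Set.range ιh) := by
      intro t
      unfold ringProd
      apply list_prod_mem
      intro y hy
      rw [List.mem_ofFn] at hy
      obtain ⟨i, rfl⟩ := hy
      exact pow_mem (mh i) _
    rw [← Algebra.toSubmodule_eq_top, eq_top_iff, ← hPBWspan, Submodule.span_le]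
    rintro _ ⟨z, rfl⟩
    refine (Subalgebra.mem_toSubmodule _).2 ?_
    exact mul_mem (mul_mem (mul_mem (mul_mem (mul_mem (pow_mem mf _) (pow_mem mF _)) (mG _))
      (pow_mem mH _)) (pow_mem me _)) (pow_mem mE _)
  let b : Module.Basis (ℕ × Fin 2 × (Fin km → ℕ) × ℕ × ℕ × Fin 2) ℂ Ug0 :=
    Module.Basis.mk hPBWindep hPBWspan.ge
  have hb : ∀ z, b z = pbw ιh ιe ιH ιf ιE ιF z := by
    intro z
    simp only [b, Module.Basis.mk_apply]
    rfl
  have hI : I0 = II ιf := hI0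
  clear hI0
  subst hI
  have qC : yC - ZZ ιe ιH ιf ιE ιF ∈ II ιf := by
    rw [hyC, R.yC_sub]; exact mem_II.2 ⟨_, rfl⟩
  have qE : yE - EP ιH ιf ιE ιF ∈ II ιf := by
    rw [hyE, OspRel.yE_sub]; exact mem_II.2 ⟨_, rfl⟩
  have qF : yF - ιF ∈ II ιf := by rw [hyF, sub_self]; exact zero_mem _
  have qh : ∀ i, ιh i - ιh i ∈ II ιf := fun i => by rw [sub_self]; exact zero_mem _
  have cF : Commute ιF ιf := R.f_F.symm
  have hq : ∀ x y : Ug0, x - y ∈ II ιf →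
      (Submodule.Quotient.mk x : Ug0 ⧸ II ιf) = Submodule.Quotient.mk y := fun x y hxy =>
    (Submodule.Quotient.eq _).2 hxy
  have hcomm : ∀ x x' y y' : Ug0, x - x' ∈ II ιf → y - y' ∈ II ιf → Commute x' ιf →
      Commute y' ιf → Commute x' y' →
      (Submodule.Quotient.mk (x * y - y * x) : Ug0 ⧸ II ιf) = 0 := by
    intro x x' y y' hx hy cx cy hxy
    rw [Submodule.Quotient.mk_eq_zero]
    have := sub_mem (II_mul hx hy cy) (II_mul hy hx cx)
    convert this using 1
    rw [hxy.eq]; abel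
  have hw : ∀ z : Fin 2 × (Fin km → ℕ) × ℕ × Fin 2, (Submodule.Quotient.mk
            (yF ^ (z.1 : ℕ) * ringProd (fun i => ιh i ^ z.2.1 i) *
              yC ^ z.2.2.1 * yE ^ (z.2.2.2 : ℕ)) : Ug0 ⧸ II ιf) =
        Submodule.Quotient.mk (ww ιh ιe ιH ιf ιE ιF z) := by
    intro z
    apply hq
    refine II_mul (II_mul ?_ (II_pow qC R.Z_f _) (R.Z_f.pow_left _)) (II_pow qE R.EP_f _)
      (R.EP_f.pow_left _)
    rw [hyF]
    exact (sub_self (ιF ^ (z.1 : ℕ) * GG ιh z.2.1)).symm ▸ zero_mem _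
  simp only [hw]
  let π : Ug0 →ₗ[ℂ] Ug0 ⧸ II ιf := (II ιf).mkQ.restrictScalars ℂ
  have hπ : ∀ x, (Submodule.Quotient.mk x : Ug0 ⧸ II ιf) = π x := fun x => rfl
  refine ⟨⟨fun i => II_ad (qh i) (R.f_h i), II_ad qE R.EP_f, II_ad qC R.Z_f, II_ad qF cF⟩,
    ⟨?_, ?_, ?_, ?_, ?_, ?_, ?_, ?_, ?_⟩, ?_, ?_⟩
  · apply hq
    have h1 := II_mul qE qE R.EP_f
    rw [R.EP_EP] at h1
    have h2 := mulf_sub ιf ((1/2 : ℂ) • ZZ ιe ιH ιf ιE ιF + (1/16 : ℂ) • 1)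
    have h3 := sub_mem (II_smul 2 (add_mem h1 h2)) qC
    convert h3 using 1
    module
  · apply hq
    rw [hyF, hFF, ← smul_sub]
    exact II_smul _ (mem_II.2 ⟨1, one_mul _⟩)
  · intro i j
    rw [R.hhh i j, sub_self]; rfl
  · intro i; exact hcomm _ _ _ _ (qh i) qE (R.f_h i) R.EP_f (R.h_EP i)
  · intro i; exact hcomm _ _ _ _ (qh i) qC (R.f_h i) R.Z_f (R.h_Z i)
  · intro i; exact hcomm _ _ _ _ (qh i) qF (R.f_h i) cF (R.hhF i)
  · exact hcomm _ _ _ _ qC qE R.Z_f R.EP_f R.Z_EP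
  · exact hcomm _ _ _ _ qC qF R.Z_f cF R.Z_F
  · rw [Submodule.Quotient.mk_eq_zero]
    have := add_mem (II_mul qE qF cF) (II_mul qF qE R.EP_f)
    convert this using 1
    rw [R.EP_F]; abel
  · rw [linearIndependent_iff']
    intro s g hs
    refine R.indep htop b hb s g ?_
    rw [← Submodule.Quotient.mk_eq_zero, hπ, map_sum]
    simpa only [map_smul, hπ] using hs
  · have hspan : Submodule.span ℂ (Set.range
        (fun z : Fin 2 × (Fin km → ℕ) × ℕ × Fin 2 =>
          (Submodule.Quotient.mk (ww ιh ιe ιH ιf ιE ιF z) : Ug0 ⧸ II ιf))) =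
        (KK ιh ιe ιH ιf ιE ιF).map π := by
      rw [KK, Submodule.map_span, ← Set.range_comp]
      rfl
    rw [hspan, hInv]
    ext q
    constructor
    · rintro ⟨y, rfl, hy⟩
      obtain ⟨k, hk, h1⟩ := R.inv_main htop y hy
      exact ⟨k, hk, (hq _ _ h1).symm⟩
    · rintro ⟨k, hk, rfl⟩
      refine ⟨k, rfl, ?_⟩
      rw [(R.KK_f hk).eq, sub_self]
      exact zero_mem _
end
end

section
/- Assume r = dim g(−1)₁̄ is odd and e = e_θ is minimal. The center Z(U(g₀,e)) of the minimal finite W-superalgebra U(g₀,e) is generated by the elements Θ′_{h_i} (1 ≤ i ≤ k−1) and C′_θ; moreover the canonical projection Pr₀ : U(g₀) ↠ U(g₀)/(I₀)_χ restricts to an algebra isomorphism from the center Z(U(g₀)) onto Z(U(g₀,e)). -/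
noncomputable section

open scoped BigOperators

set_option linter.unusedSimpArgs false
set_option linter.unusedSectionVars false

namespace Aux

abbrev Idx (km : ℕ) := ℕ × Fin 2 × (Fin km → ℕ) × ℕ × ℕ × Fin 2

structure Rel {km : ℕ} {U : Type} [Ring U] [Algebra ℂ U] (h : Fin km → U)
    (e H f E F : U) : Prop where
  HE : H * E = E * H + E
  HF : H * F = F * H - F
  EF : E * F = H - F * E
  EE : E * E = e
  FF : F * F = - f
  He : H * e = e * H + (2 : ℂ) • e
  fH : f * H = H * f + (2 : ℂ) • f
  fe : f * e = e * f - H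
  eE : e * E = E * e
  eF : e * F = F * e - E
  fE : f * E = E * f - F
  fF : f * F = F * f
  hE : ∀ i, h i * E = E * h i
  hF : ∀ i, h i * F = F * h i
  hH : ∀ i, h i * H = H * h i
  hh : ∀ i j, h i * h j = h j * h i

def mon {km : ℕ} {U : Type} [Ring U] (h : Fin km → U) (e H f E F : U) (z : Idx km) : U :=
  f ^ z.1 * F ^ (z.2.1 : ℕ) * ringProd (fun i => h i ^ z.2.2.1 i) *
          H ^ z.2.2.2.1 * e ^ z.2.2.2.2.1 * E ^ (z.2.2.2.2.2 : ℕ)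

section
variable {km : ℕ} {U : Type} [Ring U] [Algebra ℂ U] {h : Fin km → U} {e H f E F : U}

def Cas (e H f E F : U) : U :=
  (2 : ℂ) • (e * f) + (1/2 : ℂ) • (H * H) - (3/2 : ℂ) • H + F * E

def yE (H E F : U) : U := E + (1/2 : ℂ) • (F * H) - (3/4 : ℂ) • F

theorem ringProd_mem (S : Subalgebra ℂ U) {g : Fin km → U} (hg : ∀ i, g i ∈ S) :
    ringProd g ∈ S := by
  unfold ringProd
  apply Subalgebra.list_prod_mem
  intro x hx
  rw [List.mem_ofFn] at hx
  obtain ⟨i, rfl⟩ := hx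
  exact hg i

theorem gen (R : Rel h e H f E F)
    (hs : Submodule.span ℂ (Set.range (mon h e H f E F)) = ⊤) (S : Subalgebra ℂ U)
    (hE : E ∈ S) (hF : F ∈ S) (hh : ∀ i, h i ∈ S) (x : U) : x ∈ S := by
  have he : e ∈ S := R.EE ▸ S.mul_mem hE hE
  have hf : f ∈ S := by
    have : f = -(F * F) := by rw [R.FF, neg_neg]
    rw [this]; exact S.neg_mem (S.mul_mem hF hF)
  have hH : H ∈ S := by
    have : H = E * F + F * E := by rw [R.EF, sub_add_cancel]
    rw [this]; exact S.add_mem (S.mul_mem hE hF) (S.mul_mem hF hE)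
  have : (⊤ : Submodule ℂ U) ≤ Subalgebra.toSubmodule S := by
    rw [← hs, Submodule.span_le]
    rintro _ ⟨z, rfl⟩
    refine S.mul_mem (S.mul_mem (S.mul_mem (S.mul_mem (S.mul_mem ?_ ?_) ?_) ?_) ?_) ?_
    on_goal 3 => exact ringProd_mem S fun i => S.pow_mem (hh i) _
    all_goals apply S.pow_mem; assumption
  exact this Submodule.mem_top

theorem central_of (R : Rel h e H f E F)
    (hs : Submodule.span ℂ (Set.range (mon h e H f E F)) = ⊤) (x : U)
    (hE : E * x = x * E) (hF : F * x = x * F) (hh : ∀ i, h i * x = x * h i) :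
    x ∈ Subalgebra.center ℂ U := by
  rw [Subalgebra.mem_center_iff]
  intro b
  have := gen R hs (Subalgebra.centralizer ℂ {x})
    (by rw [Subalgebra.mem_centralizer_iff]; rintro _ rfl; exact hE.symm)
    (by rw [Subalgebra.mem_centralizer_iff]; rintro _ rfl; exact hF.symm)
    (by intro i; rw [Subalgebra.mem_centralizer_iff]; rintro _ rfl; exact (hh i).symm) b
  rw [Subalgebra.mem_centralizer_iff] at this
  exact (this x rfl).symm

theorem h_central (R : Rel h e H f E F)
    (hs : Submodule.span ℂ (Set.range (mon h e H f E F)) = ⊤) (i : Fin km) :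
    h i ∈ Subalgebra.center ℂ U :=
  central_of R hs _ (R.hE i).symm (R.hF i).symm fun j => R.hh j i

theorem mulL {a b c : U} (hab : a * b = c) (x : U) : a * (b * x) = c * x := by
  rw [← mul_assoc, hab]

theorem cas_E (R : Rel h e H f E F) : E * Cas e H f E F = Cas e H f E F * E := by
  unfold Cas
  simp only [mul_add, add_mul, mul_sub, sub_mul, smul_mul_assoc, mul_smul_comm, mul_assoc,
    R.HE, R.HF, R.EF, R.EE, R.FF, R.He, R.fH, R.fe, R.fE, R.fF, R.eE, R.eF, 
    mulL R.HE, mulL R.HF, mulL R.EF, mulL R.EE, mulL R.FF, mulL R.fH, mulL R.fE, mulL R.eE, mulL R.eF]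
  module

theorem cas_F (R : Rel h e H f E F) : F * Cas e H f E F = Cas e H f E F * F := by
  unfold Cas
  simp only [mul_add, add_mul, mul_sub, sub_mul, smul_mul_assoc, mul_smul_comm, mul_assoc, neg_mul, mul_neg,
    R.HE, R.HF, R.EF, R.EE, R.FF, R.He, R.fH, R.fe, R.fE, R.fF, R.eF, 
    mulL R.HE, mulL R.HF, mulL R.EF, mulL R.EE, mulL R.FF, mulL R.fH, mulL R.fE, mulL R.eF]
  module

theorem cas_central (R : Rel h e H f E F)
    (hs : Submodule.span ℂ (Set.range (mon h e H f E F)) = ⊤) :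
    Cas e H f E F ∈ Subalgebra.center ℂ U := by
  refine central_of R hs _ (cas_E R) (cas_F R) fun i => ?_
  have := h_central R hs i
  rw [Subalgebra.mem_center_iff] at this
  exact (this _).symm

theorem f_yE (R : Rel h e H f E F) : f * yE H E F = yE H E F * f + F * (f - 1) := by
  unfold yE
  simp only [mul_add, add_mul, mul_sub, sub_mul, smul_mul_assoc, mul_smul_comm, mul_assoc,
    R.fE, R.fF, mulL R.fF, R.fH, mul_one]
  module

theorem yE_F (R : Rel h e H f E F) :
    yE H E F * F = - (F * yE H E F) - H * (f - 1) := by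
  unfold yE
  simp only [mul_add, add_mul, mul_sub, sub_mul, smul_mul_assoc, mul_smul_comm, mul_assoc, neg_mul, mul_neg,
    R.EF, R.fH, R.FF, mulL R.FF, R.HF, mul_one]
  module

theorem yE_yE (R : Rel h e H f E F) : ∃ X : U,
    yE H E F * yE H E F = (1/2 : ℂ) • Cas e H f E F + (1/16 : ℂ) • 1 + X * (f - 1) := by
  refine ⟨-e - (1/4 : ℂ) • ((H + 2) * (H + 2) - (H+2)) + (3/8 : ℂ) • (2 * (H+2) - 1) - (9/16 : ℂ) • 1, ?_⟩
  unfold yE Cas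
  have h2 : (2 : U) = (2 : ℂ) • 1 := by rw [two_smul, one_add_one_eq_two]
  simp only [h2, mul_add, add_mul, mul_sub, sub_mul, smul_mul_assoc, mul_smul_comm, mul_assoc, neg_mul, mul_neg, smul_add, smul_sub, one_mul, mul_one,
    R.HE, R.HF, R.EF, R.EE, R.FF, R.He, R.fH, R.fe, R.fE, R.fF, R.eF, 
    mulL R.HE, mulL R.HF, mulL R.EF, mulL R.EE, mulL R.FF, mulL R.fH, mulL R.fE, mulL R.eF]
  module

theorem cas_HC (R : Rel h e H f E F) : Cas e H f E F =
    (1/2 : ℂ) • (H * H + H) + ((2 : ℂ) • (f * E) + F) * E := by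
  unfold Cas
  simp only [mul_add, add_mul, mul_sub, sub_mul, smul_mul_assoc, mul_smul_comm, mul_assoc, 
     R.EE, R.fe]
  module

end

section
variable {km : ℕ} {U : Type} [Ring U] [Algebra ℂ U] {h : Fin km → U} {e H f E F : U}
variable {Q : Type} [AddCommGroup Q] [Module U Q]

/-- the elements `binom(H/2, n)` -/
def PP (H : U) : ℕ → U
  | 0 => 1
  | (n+1) => (1 / (2 * ((n : ℂ) + 1))) • (PP H n * (H - (2 * (n : ℂ)) • 1))

theorem PP_zero (H : U) : PP H 0 = 1 := rfl

theorem PP_H (H : U) (n : ℕ) :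
    PP H n * H = (2 * ((n : ℂ) + 1)) • PP H (n+1) + (2 * (n : ℂ)) • PP H n := by
  have : (2 * ((n : ℂ) + 1)) ≠ 0 := by
    have : ((n : ℂ) + 1) ≠ 0 := by exact_mod_cast Nat.succ_ne_zero n
    simpa using this
  rw [PP, smul_smul, mul_one_div_cancel this, one_smul, mul_sub, mul_smul_comm, mul_one]
  abel

theorem H_PP (H : U) (n : ℕ) : H * PP H n = PP H n * H := by
  induction n with
  | zero => simp [PP]
  | succ n ih =>
    rw [PP, mul_smul_comm, smul_mul_assoc, ← mul_assoc, ih, mul_assoc, mul_assoc]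
    congr 2
    simp [mul_sub, sub_mul]

theorem f_PP (R : Rel h e H f E F) (n : ℕ) :
    f * PP H (n+1) = (PP H (n+1) + PP H n) * f := by
  have step : ∀ c : ℂ, f * (H - c • 1) = (H - (c - 2) • 1) * f := by
    intro c
    simp only [mul_sub, sub_mul, R.fH, mul_smul_comm, smul_mul_assoc, mul_one, one_mul]
    module
  induction n with
  | zero =>
    simp only [PP, one_mul, mul_smul_comm, step]
    simp only [sub_mul, add_mul, smul_mul_assoc, one_mul]
    push_cast
    module
  | succ n ih =>
    have h0 : ((n : ℂ) + 1 + 1) ≠ 0 := by exact_mod_cast Nat.succ_ne_zero (n+1)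
    rw [PP, mul_smul_comm, ← mul_assoc, ih, mul_assoc, step, ← mul_assoc, ← smul_mul_assoc]
    congr 1
    have h1 := PP_H H n
    have h2 : ((n : ℂ) + 1) ≠ 0 := by exact_mod_cast Nat.succ_ne_zero n
    simp only [mul_sub, add_mul, h1, mul_smul_comm, mul_one]
    push_cast
    match_scalars <;> field_simp <;> ring

theorem PP_indep (R : Rel h e H f E F) (N : ℕ) : ∀ (v : ℕ → Q) (_ : ∀ n, f • v n = v n)
    (_ : ∑ n ∈ Finset.range N, PP H n • v n = 0), ∀ n < N, v n = 0 := by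
  induction N with
  | zero => intro v _ _ n hn; omega
  | succ N ih =>
    intro v hv hsum
    have hD : ∑ n ∈ Finset.range N, PP H n • v (n+1) = 0 := by
      have h1 : f • (∑ n ∈ Finset.range (N+1), PP H n • v n)
          - ∑ n ∈ Finset.range (N+1), PP H n • v n = 0 := by rw [hsum]; simp
      rw [Finset.sum_range_succ', smul_add, Finset.smul_sum] at h1
      have h2 : ∀ n, f • PP H (n+1) • v (n+1) = PP H (n+1) • v (n+1) + PP H n • v (n+1) := by
        intro n
        rw [smul_smul, f_PP R, mul_smul, hv, add_smul]
      simp only [h2, Finset.sum_add_distrib, PP_zero, one_smul, hv] at h1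
      rw [← h1]; abel
    have h3 := ih (fun n => v (n+1)) (fun n => hv _) hD
    have h4 : v 0 = 0 := by
      rw [Finset.sum_range_succ', Finset.sum_eq_zero] at hsum
      · simpa [PP] using hsum
      · intro n hn
        rw [h3 n (Finset.mem_range.1 hn), smul_zero]
    intro n hn
    cases n with
    | zero => exact h4
    | succ n => exact h3 n (by omega)

theorem PP_inv (R : Rel h e H f E F) (N : ℕ) (v : ℕ → Q) (hv : ∀ n, f • v n = v n)
    (x : Q) (hx : x = ∑ n ∈ Finset.range (N+1), PP H n • v n) (hfx : f • x = x) :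
    x = v 0 := by
  have h0 := PP_indep R (N+1) (fun n => if n = 0 then v 0 - x else v n)
    (by intro n; by_cases hn : n = 0 <;> simp [hn, hv, smul_sub, hfx])
    (by
      rw [Finset.sum_range_succ'] at hx ⊢
      simp only [PP_zero, one_smul] at hx ⊢
      simp only [Nat.add_eq_zero_iff, one_ne_zero, and_false, if_false, if_true]
      rw [← add_sub_assoc, ← hx, sub_self]) 0 (by omega)
  simp only [if_true] at h0
  exact (sub_eq_zero.1 h0).symm

/-- elements of the W-algebra in normal form -/
def InW (S : Subalgebra ℂ U) (H E F : U) (w : Q) (x : Q) : Prop :=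
  ∃ a ∈ S, ∃ b ∈ S, ∃ c ∈ S, ∃ d ∈ S,
    x = a • w + b • F • w + c • yE H E F • w + d • F • yE H E F • w

theorem inv_F (R : Rel h e H f E F) {v : Q} (hv : f • v = v) : f • F • v = F • v := by
  rw [smul_smul, R.fF, mul_smul, hv]

theorem inv_yE (R : Rel h e H f E F) {v : Q} (hv : f • v = v) :
    f • yE H E F • v = yE H E F • v := by
  rw [smul_smul, f_yE R, add_smul, mul_smul, mul_smul, sub_smul, hv, one_smul, sub_self,
    smul_zero, add_zero]

theorem act_FF (R : Rel h e H f E F) {v : Q} (hv : f • v = v) : F • F • v = - v := by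
  rw [smul_smul, R.FF, neg_smul, hv]

theorem act_yEF (R : Rel h e H f E F) {v : Q} (hv : f • v = v) :
    yE H E F • F • v = - F • yE H E F • v := by
  rw [smul_smul, yE_F R, sub_smul, neg_smul, mul_smul, mul_smul, sub_smul, hv, one_smul, sub_self,
    smul_zero, sub_zero, neg_smul]

/-- Kay -/
def KK (e H f E F : U) : U := (1/2 : ℂ) • Cas e H f E F + (1/16 : ℂ) • 1

theorem act_yEyE (R : Rel h e H f E F) {v : Q} (hv : f • v = v) :
    yE H E F • yE H E F • v = KK e H f E F • v := by
  obtain ⟨X, hX⟩ := yE_yE R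
  rw [smul_smul, hX, add_smul, mul_smul, sub_smul, hv, one_smul, sub_self,
    smul_zero, add_zero, KK]

variable {S : Subalgebra ℂ U} {w : Q}

theorem InW.add {x y : Q} (hx : InW S H E F w x) (hy : InW S H E F w y) :
    InW S H E F w (x + y) := by
  obtain ⟨a, ha, b, hb, c, hc, d, hd, rfl⟩ := hx
  obtain ⟨a', ha', b', hb', c', hc', d', hd', rfl⟩ := hy
  refine ⟨_, S.add_mem ha ha', _, S.add_mem hb hb', _, S.add_mem hc hc', _, S.add_mem hd hd', ?_⟩
  simp only [add_smul]; abel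

theorem InW.smul {x : Q} {s : U} (hs : s ∈ S) (hx : InW S H E F w x) :
    InW S H E F w (s • x) := by
  obtain ⟨a, ha, b, hb, c, hc, d, hd, rfl⟩ := hx
  refine ⟨_, S.mul_mem hs ha, _, S.mul_mem hs hb, _, S.mul_mem hs hc, _, S.mul_mem hs hd, ?_⟩
  simp only [mul_smul, smul_add]

theorem InW.zero : InW S H E F w (0 : Q) :=
  ⟨0, S.zero_mem, 0, S.zero_mem, 0, S.zero_mem, 0, S.zero_mem, by simp⟩

theorem InW.base : InW S H E F w w :=
  ⟨1, S.one_mem, 0, S.zero_mem, 0, S.zero_mem, 0, S.zero_mem, by simp⟩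

theorem cc (hS : S ≤ Subalgebra.center ℂ U) {s : U} (hs : s ∈ S) (u : U) (v : Q) :
    u • s • v = s • u • v := by
  have := hS hs
  rw [Subalgebra.mem_center_iff] at this
  rw [smul_smul, this, mul_smul]

theorem InW.actF (R : Rel h e H f E F) (hS : S ≤ Subalgebra.center ℂ U) (hw : f • w = w)
    {x : Q} (hx : InW S H E F w x) : InW S H E F w (F • x) := by
  obtain ⟨a, ha, b, hb, c, hc, d, hd, rfl⟩ := hx
  refine ⟨_, S.neg_mem hb, _, ha, _, S.neg_mem hd, _, hc, ?_⟩
  simp only [smul_add, cc hS ha, cc hS hb, cc hS hc, cc hS hd]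
  rw [act_FF R hw, act_FF R (inv_yE R hw)]
  simp only [smul_neg, neg_smul]
  abel

theorem InW.inv (R : Rel h e H f E F) (hS : S ≤ Subalgebra.center ℂ U) (hw : f • w = w)
    {x : Q} (hx : InW S H E F w x) : f • x = x := by
  obtain ⟨a, ha, b, hb, c, hc, d, hd, rfl⟩ := hx
  simp only [smul_add, cc hS ha, cc hS hb, cc hS hc, cc hS hd]
  rw [hw, inv_F R hw, inv_F R (inv_yE R hw), inv_yE R hw]

theorem InW.actY (R : Rel h e H f E F) (hS : S ≤ Subalgebra.center ℂ U) (hw : f • w = w)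
    (hC : Cas e H f E F ∈ S)
    {x : Q} (hx : InW S H E F w x) : InW S H E F w (yE H E F • x) := by
  obtain ⟨a, ha, b, hb, c, hc, d, hd, rfl⟩ := hx
  have hK : KK e H f E F ∈ S := S.add_mem (S.smul_mem hC _) (S.smul_mem S.one_mem _)
  refine ⟨_, S.mul_mem hc hK, _, S.neg_mem (S.mul_mem hd hK), _, ha, _, S.neg_mem hb, ?_⟩
  simp only [smul_add, cc hS ha, cc hS hb, cc hS hc, cc hS hd]
  rw [act_yEyE R hw, act_yEF R hw, act_yEF R (inv_yE R hw), act_yEyE R hw]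
  simp only [smul_neg, neg_smul, mul_smul, cc hS hK]
  abel

/-- sums `∑ P_n v_n` -/
def InM (S : Subalgebra ℂ U) (H E F : U) (w : Q) : AddSubgroup Q :=
  AddSubgroup.closure {x | ∃ n v, InW S H E F w v ∧ x = PP H n • v}

theorem InM_W {v : Q} (hv : InW S H E F w v) : v ∈ InM S H E F w :=
  AddSubgroup.subset_closure ⟨0, v, hv, by simp [PP]⟩

theorem InM_ind (u : U) (hu : ∀ n v, InW S H E F w v → u • PP H n • v ∈ InM S H E F w)
    {x : Q} (hx : x ∈ InM S H E F w) : u • x ∈ InM S H E F w := by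
  refine AddSubgroup.closure_induction (p := fun x _ => u • x ∈ InM S H E F w) ?_ ?_ ?_ ?_ hx
  · rintro _ ⟨n, v, hv, rfl⟩; exact hu n v hv
  · rw [smul_zero]; exact AddSubgroup.zero_mem _
  · intro x y _ _ h1 h2; rw [smul_add]; exact AddSubgroup.add_mem _ h1 h2
  · intro x _ h1; rw [smul_neg]; exact AddSubgroup.neg_mem _ h1

theorem InM_S (hS : S ≤ Subalgebra.center ℂ U) {s : U} (hs : s ∈ S)
    {x : Q} (hx : x ∈ InM S H E F w) : s • x ∈ InM S H E F w := by
  refine InM_ind s ?_ hx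
  intro n v hv
  rw [← cc hS hs]
  exact AddSubgroup.subset_closure ⟨n, _, hv.smul hs, rfl⟩

theorem sC (c : ℂ) : c • (1 : U) ∈ S := S.smul_mem S.one_mem c

theorem smul_eq (c : ℂ) (u : U) : c • u = (c • (1 : U)) * u := by simp

theorem InM_H (hS : S ≤ Subalgebra.center ℂ U) 
    {x : Q} (hx : x ∈ InM S H E F w) : H • x ∈ InM S H E F w := by
  refine InM_ind H ?_ hx
  intro n v hv
  rw [smul_smul, H_PP, PP_H, smul_eq, smul_eq _ (PP H n), add_smul, mul_smul,
    mul_smul ((2 * (n : ℂ)) • (1 : U))]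
  exact AddSubgroup.add_mem _
    (InM_S hS (sC _) (AddSubgroup.subset_closure ⟨_, _, hv, rfl⟩))
    (InM_S hS (sC _) (AddSubgroup.subset_closure ⟨_, _, hv, rfl⟩))

/-- if `u H = (H + c) u` and `u` maps `W` to `M` then `u` preserves `M` -/
theorem InM_shift (hS : S ≤ Subalgebra.center ℂ U) (u : U) (c : ℂ)
    (hu : u * H = (H + c • 1) * u)
    (h0 : ∀ v, InW S H E F w v → u • v ∈ InM S H E F w)
    {x : Q} (hx : x ∈ InM S H E F w) : u • x ∈ InM S H E F w := by
  refine InM_ind u ?_ hx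
  intro n v hv
  induction n with
  | zero => simpa [PP] using h0 v hv
  | succ n ih =>
    have : u * PP H (n+1) = ((1 / (2 * ((n : ℂ) + 1))) • (1:U)) *
        (H * (u * PP H n) + ((c - 2 * n) • (1 : U)) * (u * PP H n)) := by
      have e1 : PP H (n+1) = (1 / (2 * ((n : ℂ) + 1))) • ((H - (2 * (n : ℂ)) • 1) * PP H n) := by
        rw [PP, mul_sub, sub_mul, H_PP]; simp
      rw [e1, ← smul_eq, mul_smul_comm, ← mul_assoc, mul_sub, hu]
      congr 1
      simp only [add_mul, sub_mul, smul_mul_assoc, mul_smul_comm, mul_one, one_mul, mul_assoc]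
      module
    rw [← mul_smul] at ih
    rw [smul_smul, this, mul_smul, add_smul, mul_smul H, mul_smul ((c - 2 * n) • (1 : U))]
    exact InM_S hS (sC _) (AddSubgroup.add_mem _ (InM_H hS ih) (InM_S hS (sC _) ih))

theorem InM_F (R : Rel h e H f E F) (hS : S ≤ Subalgebra.center ℂ U) (hw : f • w = w)
    {x : Q} (hx : x ∈ InM S H E F w) : F • x ∈ InM S H E F w := by
  refine InM_shift hS F 1 ?_ (fun v hv => InM_W (hv.actF R hS hw)) hx
  rw [add_mul, R.HF]; simp

theorem InM_E (R : Rel h e H f E F) (hS : S ≤ Subalgebra.center ℂ U) (hw : f • w = w)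
    (hC : Cas e H f E F ∈ S)
    {x : Q} (hx : x ∈ InM S H E F w) : E • x ∈ InM S H E F w := by
  refine InM_shift hS E (-1) ?_ (fun v hv => ?_) hx
  · rw [add_mul, R.HE]; simp
  · have : E = yE H E F + ((-1/2 : ℂ) • (1:U)) * (H * F) + ((1/4 : ℂ) • (1:U)) * F := by
      unfold yE
      rw [← smul_eq, ← smul_eq, R.HF]; module
    have e2 : E • v = yE H E F • v + ((-1/2 : ℂ) • (1:U)) • H • F • v
        + ((1/4 : ℂ) • (1:U)) • F • v := by
      nth_rewrite 1 [this]
      simp only [add_smul, mul_smul]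
    rw [e2]
    have := InM_W (hv.actF R hS hw)
    exact AddSubgroup.add_mem _ (AddSubgroup.add_mem _ (InM_W (hv.actY R hS hw hC))
      (InM_S hS (sC _) (InM_H hS this))) (InM_S hS (sC _) this)

theorem InM_all (R : Rel h e H f E F)
    (hs : Submodule.span ℂ (Set.range (mon h e H f E F)) = ⊤)
    (hS : S ≤ Subalgebra.center ℂ U) (hw : f • w = w)
    (hC : Cas e H f E F ∈ S) (hh : ∀ i, h i ∈ S) (u : U) : u • w ∈ InM S H E F w := by
  let T : Subalgebra ℂ U :=
    { carrier := {u | ∀ x ∈ InM S H E F w, u • x ∈ InM S H E F w}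
      mul_mem' := by
        intro a b ha hb x hx
        rw [mul_smul]; exact ha _ (hb _ hx)
      add_mem' := by
        intro a b ha hb x hx
        rw [add_smul]; exact AddSubgroup.add_mem _ (ha _ hx) (hb _ hx)
      algebraMap_mem' := by
        intro c x hx
        exact InM_S hS (S.algebraMap_mem c) hx }
  exact gen R hs T (fun x hx => InM_E R hS hw hC hx) (fun x hx => InM_F R hS hw hx)
    (fun i x hx => InM_S hS (hh i) hx) u w (InM_W InW.base)

theorem InM_sum {x : Q} (hx : x ∈ InM S H E F w) : ∃ N, ∃ v : ℕ → Q,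
    (∀ n, InW S H E F w (v n)) ∧ (∀ n, N ≤ n → v n = 0) ∧
    x = ∑ n ∈ Finset.range (N+1), PP H n • v n := by
  have ext : ∀ (N M : ℕ) (v : ℕ → Q), (∀ n, N ≤ n → v n = 0) → N ≤ M →
      ∑ n ∈ Finset.range (N+1), PP H n • v n = ∑ n ∈ Finset.range (M+1), PP H n • v n := by
    intro N M v hv hNM
    apply Finset.sum_subset
    · intro n; simp only [Finset.mem_range]; omega
    · intro n _ hn
      rw [hv n (by simp only [Finset.mem_range] at hn; omega), smul_zero]
  refine AddSubgroup.closure_induction (p := fun x _ => ∃ N, ∃ v : ℕ → Q,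
    (∀ n, InW S H E F w (v n)) ∧ (∀ n, N ≤ n → v n = 0) ∧
    x = ∑ n ∈ Finset.range (N+1), PP H n • v n) ?_ ?_ ?_ ?_ hx
  · rintro _ ⟨n, v, hv, rfl⟩
    refine ⟨n+1, fun m => if m = n then v else 0, ?_, ?_, ?_⟩
    · intro m; dsimp only; split_ifs; exacts [hv, InW.zero]
    · intro m hm; dsimp only; rw [if_neg (by omega)]
    · rw [Finset.sum_eq_single n]
      · simp
      · intro m _ hm; simp [hm]
      · intro hn; exact absurd (Finset.mem_range.2 (by omega)) hn
  · exact ⟨0, fun _ => 0, fun _ => InW.zero, fun _ _ => rfl, by simp⟩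
  · rintro x y _ _ ⟨N, v, hv, hN, rfl⟩ ⟨M, v', hv', hM, rfl⟩
    refine ⟨max N M, fun n => v n + v' n, fun n => (hv n).add (hv' n), ?_, ?_⟩
    · intro n hn
      simp only
      rw [hN n (le_trans (le_max_left _ _) hn), hM n (le_trans (le_max_right _ _) hn), add_zero]
    · rw [ext N (max N M) v hN (le_max_left _ _), ext M (max N M) v' hM (le_max_right _ _),
        ← Finset.sum_add_distrib]
      simp only [smul_add]
  · rintro x _ ⟨N, v, hv, hN, rfl⟩
    refine ⟨N, fun n => - v n, ?_, ?_, ?_⟩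
    · intro n
      have := (hv n).smul (S.neg_mem S.one_mem)
      simpa using this
    · intro n hn; simp only; rw [hN n hn, neg_zero]
    · simp

theorem inv_InW (R : Rel h e H f E F)
    (hs : Submodule.span ℂ (Set.range (mon h e H f E F)) = ⊤)
    (hS : S ≤ Subalgebra.center ℂ U) (hw : f • w = w)
    (hC : Cas e H f E F ∈ S) (hh : ∀ i, h i ∈ S) (u : U) (hu : f • u • w = u • w) :
    InW S H E F w (u • w) := by
  obtain ⟨N, v, hv, -, hx⟩ := InM_sum (InM_all R hs hS hw hC hh u)
  rw [PP_inv R N v (fun n => (hv n).inv R hS hw) _ hx hu]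
  exact hv 0

end

section
variable {km : ℕ} {U : Type} [Ring U] [Algebra ℂ U] {h : Fin km → U} {e H f E F : U}

/-- weight vectors -/
def IsWt (H : U) (k : ℂ) (x : U) : Prop := H * x - x * H = k • x

theorem IsWt.mul {k l : ℂ} {x y : U} (hx : IsWt H k x) (hy : IsWt H l y) :
    IsWt H (k + l) (x * y) := by
  unfold IsWt at *
  have : H * (x * y) - x * y * H = (H * x - x * H) * y + x * (H * y - y * H) := by
    noncomm_ring
  rw [this, hx, hy, smul_mul_assoc, mul_smul_comm, add_smul]

theorem IsWt.one : IsWt H 0 (1 : U) := by simp [IsWt]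

theorem IsWt.pow {k : ℂ} {x : U} (hx : IsWt H k x) (n : ℕ) : IsWt H (n * k) (x ^ n) := by
  induction n with
  | zero => simpa using IsWt.one
  | succ n ih =>
    rw [pow_succ]
    convert ih.mul hx using 1
    push_cast; ring

theorem IsWt.of_comm {x : U} (hx : H * x = x * H) : IsWt H 0 x := by
  simp [IsWt, hx]

/-- the weight of a PBW monomial -/
def wt (z : Idx km) : ℂ :=
  z.1 * (-2) + ((z.2.1 : ℕ) : ℂ) * (-1) + 0 + 0 + z.2.2.2.2.1 * 2 + ((z.2.2.2.2.2 : ℕ) : ℂ) * 1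

theorem f_wt (R : Rel h e H f E F) : IsWt H (-2) f := by
  rw [IsWt, R.fH]; module

theorem mon_wt (R : Rel h e H f E F) (z : Idx km) : IsWt H (wt z) (mon h e H f E F z) := by
  have hF : IsWt H (-1) F := by rw [IsWt, R.HF]; module
  have hE : IsWt H 1 E := by rw [IsWt, R.HE]; module
  have he : IsWt H 2 e := by rw [IsWt, R.He]; module
  refine (((((f_wt R).pow _).mul (hF.pow _)).mul ?_).mul ?_).mul (he.pow _) |>.mul (hE.pow _)
  · apply IsWt.of_comm
    have : ringProd (fun i => h i ^ z.2.2.1 i) ∈ Subalgebra.centralizer ℂ {H} := by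
      apply ringProd_mem
      intro i
      apply Subalgebra.pow_mem
      rw [Subalgebra.mem_centralizer_iff]
      rintro _ rfl
      exact (R.hH i).symm
    rw [Subalgebra.mem_centralizer_iff] at this
    exact this H rfl
  · exact IsWt.of_comm (Commute.pow_right rfl _)

variable (B : Module.Basis (Idx km) ℂ U)

theorem b_ind {P : U → Prop} (coe : ∀ i, P (B i)) (zero : P 0)
    (add : ∀ x y, P x → P y → P (x + y)) (smul : ∀ (c : ℂ) x, P x → P (c • x)) (x : U) : P x := by
  have hx : x ∈ Submodule.span ℂ (Set.range B) := by rw [B.span_eq]; exact Submodule.mem_top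
  induction hx using Submodule.span_induction with
  | mem x hx => obtain ⟨i, rfl⟩ := hx; exact coe i
  | zero => exact zero
  | add x y _ _ hx hy => exact add x y hx hy
  | smul c x _ hx => exact smul c x hx

/-- projection to a weight space -/
def proj (k : ℂ) : U →ₗ[ℂ] U := by
  classical
  exact B.constr ℂ (fun i => if wt i = k then B i else 0)

theorem proj_B (k : ℂ) (i : Idx km) [Decidable (wt i = k)] :
    proj B k (B i) = if wt i = k then B i else 0 := by
  classical
  unfold proj
  rw [Module.Basis.constr_basis]
  congr

theorem repr_proj (k : ℂ) (x : U) (i : Idx km) [Decidable (wt i = k)] :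
    B.repr (proj B k x) i = if wt i = k then B.repr x i else 0 := by
  classical
  induction x using b_ind B with
  | coe j =>
    rw [proj_B]
    by_cases hij : j = i
    · subst hij; split_ifs <;> simp
    · split_ifs <;> simp [Finsupp.single_apply, hij]
  | zero => simp
  | add x y hx hy => 
    simp only [map_add, Finsupp.add_apply, hx, hy]; split_ifs <;> simp
  | smul c x hx => 
    simp only [map_smul, Finsupp.smul_apply, hx]; split_ifs <;> simp

theorem repr_adH (R : Rel h e H f E F) (hB : ∀ i, B i = mon h e H f E F i) (x : U) (i : Idx km) :
    B.repr (H * x - x * H) i = wt i * B.repr x i := by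
  induction x using b_ind B with
  | coe j =>
    have := mon_wt R j
    rw [← hB, IsWt] at this
    rw [this]
    by_cases hij : j = i
    · subst hij; simp
    · simp [Finsupp.single_apply, hij]
  | zero => simp
  | add x y hx hy =>
    have : H * (x + y) - (x + y) * H = (H * x - x * H) + (H * y - y * H) := by noncomm_ring
    rw [this]
    simp only [map_add, Finsupp.add_apply, hx, hy]; ring
  | smul c x hx =>
    have : H * (c • x) - (c • x) * H = c • (H * x - x * H) := by
      rw [mul_smul_comm, smul_mul_assoc, smul_sub]
    rw [this]
    simp only [map_smul, Finsupp.smul_apply, hx, smul_eq_mul]; ring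

theorem proj_wt (R : Rel h e H f E F) (hB : ∀ i, B i = mon h e H f E F i) {j : ℂ} {x : U}
    (hx : IsWt H j x) (k : ℂ) [Decidable (j = k)] :
    proj B k x = if j = k then x else 0 := by
  classical
  apply B.ext_elem
  intro i
  have h1 := repr_adH B R hB x i
  rw [IsWt] at hx
  rw [hx, map_smul, Finsupp.smul_apply, smul_eq_mul] at h1
  have h2 : B.repr x i = 0 ∨ wt i = j := by
    by_cases h0 : B.repr x i = 0
    · exact Or.inl h0
    · exact Or.inr (mul_right_cancel₀ h0 h1).symm
  rw [repr_proj]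
  rcases h2 with h2 | h2
  · rw [h2]; split_ifs <;> simp [h2]
  · rw [h2]; split_ifs <;> simp

theorem proj_mul_f (R : Rel h e H f E F) (hB : ∀ i, B i = mon h e H f E F i) (k : ℂ) (x : U) :
    proj B k (x * f) = proj B (k + 2) x * f := by
  classical
  induction x using b_ind B with
  | coe i =>
    have hi := mon_wt R i
    rw [← hB] at hi
    rw [proj_wt B R hB (hi.mul (f_wt R)), proj_B]
    by_cases hk : wt i = k + 2
    · rw [if_pos hk, if_pos (by rw [hk]; ring)]
    · rw [if_neg hk, if_neg (fun h => hk (by rw [← h]; ring)), zero_mul]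
  | zero => simp
  | add x y hx hy => simp only [add_mul, map_add, hx, hy]
  | smul c x hx => simp only [smul_mul_assoc, map_smul, hx]

theorem proj_large (u : U) (g : ℕ → ℂ) (hg : Function.Injective g) : ∃ n, proj B (g n) u = 0 := by
  classical
  have hfin : (g ⁻¹' ((B.repr u).support.image wt : Finset ℂ)).Finite :=
    (Finset.finite_toSet _).preimage hg.injOn
  obtain ⟨n, hn⟩ := hfin.infinite_compl.nonempty
  refine ⟨n, B.ext_elem fun i => ?_⟩
  rw [repr_proj]
  split_ifs with hi
  · by_contra hne
    apply hn
    simp only [Set.mem_preimage, Finset.coe_image, Set.mem_image, Finset.mem_coe]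
    exact ⟨i, by simpa using hne, hi⟩
  · simp

theorem f_inj (hB : ∀ i, B i = mon h e H f E F i) {x : U} (hx : f * x = 0) : x = 0 := by
  have key : ∀ x i, B.repr (f * x) (i.1 + 1, i.2) = B.repr x i := by
    intro x i
    induction x using b_ind B with
    | coe j =>
      have : f * B j = B (j.1 + 1, j.2) := by
        rw [hB, hB]; simp only [mon, pow_succ', mul_assoc]
      rw [this]
      have hiff : ((j.1 + 1, j.2) = (i.1 + 1, i.2)) ↔ j = i := by
        constructor
        · intro hh
          rw [Prod.mk.injEq] at hh
          exact Prod.ext (by omega) hh.2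
        · rintro rfl; rfl
      classical
      simp only [Module.Basis.repr_self, Finsupp.single_apply, hiff]
    | zero => simp
    | add x y hx hy => simp only [mul_add, map_add, Finsupp.add_apply, hx, hy]
    | smul c x hx => simp only [mul_smul_comm, map_smul, Finsupp.smul_apply, hx]
  apply B.ext_elem
  intro i
  rw [← key x i, hx]; simp

theorem central_inj (R : Rel h e H f E F) (hB : ∀ i, B i = mon h e H f E F i) {z u : U}
    (hz : z ∈ Subalgebra.center ℂ U) (hu : z = u * (f - 1)) : z = 0 := by
  classical
  rw [Subalgebra.mem_center_iff] at hz
  have hz0 : IsWt H 0 z := IsWt.of_comm (hz H)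
  have key : ∀ k, proj B k u = proj B (k + 2) u * f - if (0 : ℂ) = k then z else 0 := by
    intro k
    rw [← proj_wt B R hB hz0 k, ← proj_mul_f B R hB]
    rw [hu, mul_sub, mul_one, map_sub]
    abel
  have up : ∀ n : ℕ, proj B 2 u = proj B (2 + 2 * n) u * f ^ n := by
    intro n
    induction n with
    | zero => simp
    | succ n ih =>
      have : (0 : ℂ) ≠ 2 + 2 * n := by
        have : ((2 + 2 * n : ℕ) : ℂ) ≠ 0 := by exact_mod_cast (by omega)
        push_cast at this
        exact this.symm
      rw [ih, key, if_neg this, sub_zero, mul_assoc, ← pow_succ']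
      congr 3
      push_cast; ring
  have h2 : proj B 2 u = 0 := by
    obtain ⟨n, hn⟩ := proj_large B u (fun n : ℕ => 2 + 2 * (n : ℂ)) (by
      intro a b hab; simpa using hab)
    rw [up n, hn, zero_mul]
  have down : ∀ n : ℕ, proj B (-2 * n) u = - (z * f ^ n) := by
    intro n
    induction n with
    | zero => rw [key]; simp [h2]
    | succ n ih =>
      have : (0 : ℂ) ≠ -2 * (n + 1 : ℕ) := by
        have : ((n + 1 : ℕ) : ℂ) ≠ 0 := Nat.cast_ne_zero.2 (Nat.succ_ne_zero n)
        simpa using this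
      rw [key, if_neg this]
      have e1 : (-2 * ((n + 1 : ℕ) : ℂ) + 2) = -2 * n := by push_cast; ring
      rw [e1, ih, sub_zero, neg_mul, mul_assoc, ← pow_succ]
  obtain ⟨n, hn⟩ := proj_large B u (fun n : ℕ => -2 * (n : ℂ)) (by
      intro a b hab; simpa using hab)
  rw [down, neg_eq_zero, ← hz] at hn
  clear down up
  induction n with
  | zero => simpa using hn
  | succ n ih =>
    rw [pow_succ', mul_assoc] at hn
    exact ih (f_inj B hB hn)

end

section
variable {km : ℕ} {U : Type} [Ring U] [Algebra ℂ U] {h : Fin km → U} {e H f E F : U}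

abbrev AA (km : ℕ) := MvPolynomial (Fin km) ℂ

/-- polynomials in the central elements -/
def phiA (R : Rel h e H f E F)
    (hs : Submodule.span ℂ (Set.range (mon h e H f E F)) = ⊤) :
    AA km →ₐ[ℂ] Subalgebra.center ℂ U :=
  MvPolynomial.aeval (fun i => (⟨h i, h_central R hs i⟩ : Subalgebra.center ℂ U))

theorem phiA_mon (R : Rel h e H f E F)
    (hs : Submodule.span ℂ (Set.range (mon h e H f E F)) = ⊤) (t : Fin km →₀ ℕ) (c : ℂ) :
    (phiA R hs (MvPolynomial.monomial t c) : U) = c • ringProd (fun i => h i ^ t i) := by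
  rw [phiA, MvPolynomial.aeval_monomial, Finsupp.prod_fintype _ _ (by simp), ← List.prod_ofFn,
    ← Algebra.smul_def]
  rw [Subalgebra.coe_smul]
  congr 1
  rw [← Subalgebra.coe_val, map_list_prod, List.map_ofFn]
  rfl

def psiZ (R : Rel h e H f E F)
    (hs : Submodule.span ℂ (Set.range (mon h e H f E F)) = ⊤) :
    Polynomial (AA km) →ₐ[ℂ] Subalgebra.center ℂ U :=
  Polynomial.eval₂AlgHom (phiA R hs)
    (⟨Cas e H f E F, cas_central R hs⟩ : Subalgebra.center ℂ U) (fun _ => Commute.all _ _)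

def psi (R : Rel h e H f E F)
    (hs : Submodule.span ℂ (Set.range (mon h e H f E F)) = ⊤) :
    Polynomial (AA km) →ₐ[ℂ] U := (Subalgebra.center ℂ U).val.comp (psiZ R hs)

theorem psi_central (R : Rel h e H f E F)
    (hs : Submodule.span ℂ (Set.range (mon h e H f E F)) = ⊤) (p : Polynomial (AA km)) :
    psi R hs p ∈ Subalgebra.center ℂ U := (psiZ R hs p).2

theorem psi_X (R : Rel h e H f E F)
    (hs : Submodule.span ℂ (Set.range (mon h e H f E F)) = ⊤) :
    psi R hs Polynomial.X = Cas e H f E F := by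
  simp [psi, psiZ]

theorem psi_C (R : Rel h e H f E F)
    (hs : Submodule.span ℂ (Set.range (mon h e H f E F)) = ⊤) (a : AA km) :
    psi R hs (Polynomial.C a) = phiA R hs a := by
  simp [psi, psiZ]

theorem psi_h (R : Rel h e H f E F)
    (hs : Submodule.span ℂ (Set.range (mon h e H f E F)) = ⊤) (i : Fin km) :
    psi R hs (Polynomial.C (MvPolynomial.X i)) = h i := by
  rw [psi_C]; simp [phiA]

theorem psi_mon (R : Rel h e H f E F)
    (hs : Submodule.span ℂ (Set.range (mon h e H f E F)) = ⊤) (t : Fin km →₀ ℕ) (c : ℂ) (k : ℕ) :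
    psi R hs (Polynomial.monomial k (MvPolynomial.monomial t c)) =
      c • (ringProd (fun i => h i ^ t i) * Cas e H f E F ^ k) := by
  rw [← Polynomial.C_mul_X_pow_eq_monomial, map_mul, map_pow, psi_X, psi_C, phiA_mon,
    smul_mul_assoc]

theorem phiA_comm (R : Rel h e H f E F)
    (hs : Submodule.span ℂ (Set.range (mon h e H f E F)) = ⊤) (a : AA km) (x : U) :
    Commute ((Subalgebra.center ℂ U).val.comp (phiA R hs) a) x := by
  have := (phiA R hs a).2
  rw [Subalgebra.mem_center_iff] at this
  exact (this x).symm

def Phi (R : Rel h e H f E F)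
    (hs : Submodule.span ℂ (Set.range (mon h e H f E F)) = ⊤) :
    Polynomial (AA km) →ₐ[ℂ] U :=
  Polynomial.eval₂AlgHom ((Subalgebra.center ℂ U).val.comp (phiA R hs)) H
    (fun _ => phiA_comm R hs _ _)

theorem Phi_X (R : Rel h e H f E F)
    (hs : Submodule.span ℂ (Set.range (mon h e H f E F)) = ⊤) :
    Phi R hs Polynomial.X = H := by
  simp [Phi]

theorem Phi_C (R : Rel h e H f E F)
    (hs : Submodule.span ℂ (Set.range (mon h e H f E F)) = ⊤) (a : AA km) :
    Phi R hs (Polynomial.C a) = phiA R hs a := by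
  simp [Phi]

variable (B : Module.Basis (Idx km) ℂ U)

theorem poly_ind {P : Polynomial (AA km) → Prop}
    (mon : ∀ k t c, P (Polynomial.monomial k (MvPolynomial.monomial t c)))
    (add : ∀ p q, P p → P q → P (p + q)) (p : Polynomial (AA km)) : P p := by
  induction p using Polynomial.induction_on' with
  | add p q hp hq => exact add p q hp hq
  | monomial k a =>
    refine MvPolynomial.induction_on' (P := fun a => P (Polynomial.monomial k a)) a
      (fun t c => mon k t c) (fun a b ha hb => ?_)
    rw [map_add]
    exact add _ _ ha hb

theorem repr_Phi (R : Rel h e H f E F)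
    (hs : Submodule.span ℂ (Set.range (mon h e H f E F)) = ⊤)
    (hB : ∀ i, B i = mon h e H f E F i) (p : Polynomial (AA km)) (m : ℕ) (t : Fin km →₀ ℕ) :
    B.repr (Phi R hs p) (0, 0, t, m, 0, 0) = MvPolynomial.coeff t (p.coeff m) := by
  induction p using poly_ind with
  | add p q hp hq => simp only [map_add, Finsupp.add_apply, hp, hq, Polynomial.coeff_add,
      MvPolynomial.coeff_add]
  | mon k s c =>
    have : Phi R hs (Polynomial.monomial k (MvPolynomial.monomial s c)) =
        c • B (0, 0, s, k, 0, 0) := by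
      rw [hB, ← Polynomial.C_mul_X_pow_eq_monomial, map_mul, map_pow, Phi_X, Phi_C, phiA_mon,
        smul_mul_assoc]
      simp [mon]
    classical
    rw [this, map_smul, Finsupp.smul_apply, Module.Basis.repr_self, Finsupp.single_apply,
      Polynomial.coeff_monomial]
    by_cases hk : k = m
    · by_cases hst : s = t
      · subst hk hst; simp
      · rw [if_neg (by simp [hst]), if_pos hk, MvPolynomial.coeff_monomial, if_neg hst]; simp
    · rw [if_neg (by simp [hk]), if_neg hk]; simp

theorem repr_mul_E (R : Rel h e H f E F)
    (hB : ∀ i, B i = mon h e H f E F i) (x : U) (m : ℕ) (t : Fin km → ℕ) :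
    B.repr (x * E) (0, 0, t, m, 0, 0) = 0 := by
  classical
  induction x using b_ind B with
  | coe j =>
    obtain ⟨n, a, s, k, c, d⟩ := j
    rcases Fin.exists_fin_two.1 ⟨d, rfl⟩ with hd | hd
    · have : B (n, a, s, k, c, d) * E = B (n, a, s, k, c, 1) := by
        rw [hB, hB, hd]; simp [mon]
      rw [this, Module.Basis.repr_self, Finsupp.single_apply, if_neg (by simp)]
    · have : B (n, a, s, k, c, d) * E = B (n, a, s, k, c + 1, 0) := by
        rw [hB, hB, hd]; simp [mon, pow_succ, mul_assoc, R.EE]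
      rw [this, Module.Basis.repr_self, Finsupp.single_apply, if_neg (by simp)]
  | zero => simp
  | add x y hx hy => simp only [add_mul, map_add, Finsupp.add_apply, hx, hy, add_zero]
  | smul c x hx => simp only [smul_mul_assoc, map_smul, Finsupp.smul_apply, hx, smul_zero]

/-- image of the Casimir -/
def gg (km : ℕ) : Polynomial (AA km) :=
  (1/2 : ℂ) • (Polynomial.X * Polynomial.X + Polynomial.X)

theorem psi_HC (R : Rel h e H f E F)
    (hs : Submodule.span ℂ (Set.range (mon h e H f E F)) = ⊤) (p : Polynomial (AA km)) :
    ∃ u, psi R hs p = Phi R hs (p.comp (gg km)) + u * E := by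
  have hC := cas_HC R
  have hg : Phi R hs (gg km) = (1/2 : ℂ) • (H * H + H) := by
    simp only [gg, map_smul, map_add, map_mul, Phi_X]
  have hcen := cas_central R hs
  rw [Subalgebra.mem_center_iff] at hcen
  have hpow : ∀ k, ∃ u, Cas e H f E F ^ k = (Phi R hs (gg km)) ^ k + u * E := by
    intro k
    induction k with
    | zero => exact ⟨0, by simp⟩
    | succ k ih =>
      obtain ⟨u, hu⟩ := ih
      refine ⟨(Phi R hs (gg km)) ^ k * ((2 : ℂ) • (f * E) + F) + Cas e H f E F * u, ?_⟩
      rw [pow_succ, hu, add_mul, mul_assoc u, hcen E, ← mul_assoc u, hcen u, pow_succ, add_mul]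
      nth_rewrite 1 [hC]
      rw [← hg, mul_add]
      noncomm_ring
  induction p using Polynomial.induction_on' with
  | add p q hp hq =>
    obtain ⟨u, hu⟩ := hp
    obtain ⟨v, hv⟩ := hq
    refine ⟨u + v, ?_⟩
    rw [map_add, hu, hv, Polynomial.add_comp, map_add, add_mul]; abel
  | monomial k a =>
    obtain ⟨u, hu⟩ := hpow k
    refine ⟨phiA R hs a * u, ?_⟩
    rw [Polynomial.monomial_comp, map_mul, map_pow, Phi_C, ← Polynomial.C_mul_X_pow_eq_monomial,
      map_mul, map_pow, psi_X, psi_C, hu, mul_add, mul_assoc]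

theorem psi_inj (R : Rel h e H f E F)
    (hs : Submodule.span ℂ (Set.range (mon h e H f E F)) = ⊤)
    (hB : ∀ i, B i = mon h e H f E F i) (p : Polynomial (AA km)) (hp : psi R hs p = 0) :
    p = 0 := by
  obtain ⟨u, hu⟩ := psi_HC R hs p
  have h0 : p.comp (gg km) = 0 := by
    ext m t
    rw [← repr_Phi B R hs hB]
    have h1 : Phi R hs (p.comp (gg km)) = (- u) * E := by
      rw [hp] at hu; rw [neg_mul]; exact eq_neg_of_add_eq_zero_left hu.symm
    rw [h1, repr_mul_E B R hB]; simp
  rw [Polynomial.comp_eq_zero_iff] at h0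
  rcases h0 with h0 | ⟨-, h0⟩
  · exact h0
  · exfalso
    have := congrArg (fun q => Polynomial.coeff q 1) h0
    simp [gg, Polynomial.coeff_X, Polynomial.coeff_C, smul_eq_zero] at this

theorem psi_K (R : Rel h e H f E F)
    (hs : Submodule.span ℂ (Set.range (mon h e H f E F)) = ⊤)
    (hB : ∀ i, B i = mon h e H f E F i) (p : Polynomial (AA km))
    (hp : psi R hs p * KK e H f E F = 0) : p = 0 := by
  have h1 : psi R hs (p * ((1/2 : ℂ) • Polynomial.X + (1/16 : ℂ) • 1)) = 0 := by
    rw [map_mul, map_add, map_smul, map_smul, psi_X, map_one]; exact hp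
  have h2 := psi_inj B R hs hB _ h1
  rcases mul_eq_zero.1 h2 with h | h
  · exact h
  · exfalso
    have := congrArg (fun q => Polynomial.coeff q 1) h
    simp [Polynomial.coeff_one, smul_eq_zero] at this
end

section
variable {km : ℕ} {U : Type} [Ring U] [Algebra ℂ U] {h : Fin km → U} {e H f E F : U}

theorem mk_eq (I : Submodule U U) (y : U) :
    (Submodule.Quotient.mk y : U ⧸ I) = y • (Submodule.Quotient.mk 1 : U ⧸ I) := by
  rw [← Submodule.Quotient.mk_smul, smul_eq_mul, mul_one]

theorem w_inv (I : Submodule U U) (hI : I = Submodule.span U {f - 1}) :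
    f • (Submodule.Quotient.mk 1 : U ⧸ I) = Submodule.Quotient.mk 1 := by
  rw [← mk_eq, Submodule.Quotient.eq, hI]
  exact Submodule.subset_span rfl

theorem kills (I : Submodule U U) (hI : I = Submodule.span U {f - 1}) {y : U}
    (hy : (Submodule.Quotient.mk y : U ⧸ I) = 0) : ∃ u, y = u * (f - 1) := by
  rw [Submodule.Quotient.mk_eq_zero, hI, Submodule.mem_span_singleton] at hy
  obtain ⟨u, hu⟩ := hy
  exact ⟨u, hu.symm⟩

theorem inv_iff (I : Submodule U U) (hI : I = Submodule.span U {f - 1}) (y : U) :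
    f * y - y * f ∈ I ↔ f • (Submodule.Quotient.mk y : U ⧸ I) = Submodule.Quotient.mk y := by
  rw [← Submodule.Quotient.eq, ← smul_eq_mul f y, Submodule.Quotient.mk_smul, mk_eq I (y * f),
    mul_smul, w_inv I hI, ← mk_eq]

theorem center_form (R : Rel h e H f E F)
    (hs : Submodule.span ℂ (Set.range (mon h e H f E F)) = ⊤)
    (B : Module.Basis (Idx km) ℂ U) (hB : ∀ i, B i = mon h e H f E F i)
    (I : Submodule U U) (hI : I = Submodule.span U {f - 1}) (y : U)
    (hy : f * y - y * f ∈ I)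
    (hyF : (Submodule.Quotient.mk (y * F) : U ⧸ I) = Submodule.Quotient.mk (F * y))
    (hyE : (Submodule.Quotient.mk (y * yE H E F) : U ⧸ I) =
      Submodule.Quotient.mk (yE H E F * y)) :
    ∃ p, (Submodule.Quotient.mk y : U ⧸ I) = Submodule.Quotient.mk (psi R hs p) := by
  set w : U ⧸ I := Submodule.Quotient.mk 1 with hw'
  have hw : f • w = w := w_inv I hI
  have hS : (psi R hs).range ≤ Subalgebra.center ℂ U := by
    rintro _ ⟨p, rfl⟩; exact psi_central R hs p
  have hC : Cas e H f E F ∈ (psi R hs).range := ⟨_, psi_X R hs⟩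
  have hh : ∀ i, h i ∈ (psi R hs).range := fun i => ⟨_, psi_h R hs i⟩
  have hyi : f • y • w = y • w := by
    rw [inv_iff I hI, mk_eq] at hy; exact hy
  obtain ⟨a, ha, b, hb, c, hc, d, hd, hx⟩ := inv_InW R hs hS hw hC hh y hyi
  -- replace `y` by its normal form
  have rep : ∀ v : U ⧸ I, f • v = v →
      y • v = a • v + b • F • v + c • yE H E F • v + d • F • yE H E F • v := by
    intro v hv
    have h0 : (Submodule.Quotient.mk (y - (a + b * F + c * yE H E F + d * (F * yE H E F)))
        : U ⧸ I) = 0 := by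
      rw [mk_eq, sub_smul, hx]
      simp only [add_smul, mul_smul]
      rw [sub_self]
    obtain ⟨u, hu⟩ := kills I hI h0
    have h1 : (y - (a + b * F + c * yE H E F + d * (F * yE H E F))) • v = 0 := by
      rw [hu, mul_smul, sub_smul, hv, one_smul, sub_self, smul_zero]
    rw [sub_smul, sub_eq_zero] at h1
    rw [h1]
    simp only [add_smul, mul_smul]
  have half : ∀ v : U ⧸ I, v + v = 0 → v = 0 := by
    intro v hv
    have : (((1/2 : ℂ) • (1 : U)) * 2) • v = 0 := by
      rw [mul_smul, two_smul, hv, smul_zero]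
    have h2 : ((1/2 : ℂ) • (1 : U)) * 2 = 1 := by
      rw [mul_two]
      module
    rwa [h2, one_smul] at this
  have hwE := inv_yE R hw
  have hwF := inv_F R hw
  -- commute with F
  rw [mk_eq, mk_eq I (F * y), mul_smul, mul_smul, ← hw', rep _ hwF, hx] at hyF
  simp only [smul_add, cc hS ha, cc hS hb, cc hS hc, cc hS hd] at hyF
  rw [act_FF R hw, act_yEF R hw, act_FF R hwE] at hyF
  rw [neg_smul, smul_neg F, act_FF R hwE] at hyF
  simp only [smul_neg, neg_neg] at hyF
  have h1 : c • F • yE H E F • w - d • yE H E F • w = 0 := by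
    apply half
    have := sub_eq_zero.2 hyF
    rw [← neg_eq_zero, ← this]
    abel
  have h2 : c • yE H E F • w + d • F • yE H E F • w = 0 := by
    have h3 : F • (c • F • yE H E F • w - d • yE H E F • w) = 0 := by rw [h1, smul_zero]
    rw [smul_sub, cc hS hc, cc hS hd, act_FF R hwE, smul_neg] at h3
    rw [← neg_eq_zero, ← h3]
    abel
  rw [add_assoc, h2, add_zero] at hx
  -- commute with yE
  have rep2 : ∀ v : U ⧸ I, f • v = v → y • v = a • v + b • F • v := by
    intro v hv
    have h0 : (Submodule.Quotient.mk (y - (a + b * F)) : U ⧸ I) = 0 := by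
      rw [mk_eq, sub_smul, hx]
      simp only [add_smul, mul_smul]
      rw [sub_self]
    obtain ⟨u, hu⟩ := kills I hI h0
    have h1 : (y - (a + b * F)) • v = 0 := by
      rw [hu, mul_smul, sub_smul, hv, one_smul, sub_self, smul_zero]
    rw [sub_smul, sub_eq_zero] at h1
    rw [h1]
    simp only [add_smul, mul_smul]
  rw [mk_eq, mk_eq I (yE H E F * y), mul_smul, mul_smul, ← hw', rep2 _ hwE, hx] at hyE
  simp only [smul_add, cc hS ha, cc hS hb] at hyE
  rw [act_yEF R hw] at hyE
  have h4 : b • F • yE H E F • w = 0 := by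
    apply half
    have := sub_eq_zero.2 hyE
    rw [neg_smul, smul_neg] at this
    rw [← this]
    abel
  have h5 : b • yE H E F • w = 0 := by
    have h3 : F • (b • F • yE H E F • w) = 0 := by rw [h4, smul_zero]
    rw [cc hS hb, act_FF R hwE, smul_neg, neg_eq_zero] at h3
    exact h3
  have h6 : (b * KK e H f E F) • w = 0 := by
    have h3 : yE H E F • (b • yE H E F • w) = 0 := by rw [h5, smul_zero]
    rw [cc hS hb, act_yEyE R hw] at h3
    rw [mul_smul]; exact h3
  have hK : KK e H f E F ∈ (psi R hs).range :=
    Subalgebra.add_mem _ (Subalgebra.smul_mem _ hC _)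
      (Subalgebra.smul_mem _ (Subalgebra.one_mem _) _)
  rw [hw', ← mk_eq] at h6
  obtain ⟨u, hu⟩ := kills I hI h6
  have h7 := central_inj B R hB (hS (Subalgebra.mul_mem _ hb hK)) hu
  obtain ⟨p, rfl⟩ := hb
  have hp : p = 0 := psi_K B R hs hB p h7
  obtain ⟨q, rfl⟩ := ha
  refine ⟨q, ?_⟩
  rw [mk_eq, mk_eq I ((psi R hs) q), ← hw', hx, hp]
  simp

end

end Aux

theorem stmt15_center_of_Ug0e
    (km : ℕ)
    -- U(g₀), the enveloping superalgebra of g₀ = h^e ⊕ s_θ, s_θ ≅ osp(1|2):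
    -- ιh i, ιe, ιH, ιf, ιE, ιF are the images of the basis h_1,…,h_{k−1} of
    -- h^e and of e, h, f, E = [√−2·v_{(r+1)/2}, e], F = √−2·v_{(r+1)/2}
    (Ug0 : Type) [Ring Ug0] [Algebra ℂ Ug0]
    (ιh : Fin km → Ug0) (ιe ιH ιf ιE ιF : Ug0)
    -- the osp(1|2)-relations of Lemma `osp12genecom`
    (hhe : ιH * ιe - ιe * ιH = (2 : ℂ) • ιe)
    (hhf : ιH * ιf - ιf * ιH = (-2 : ℂ) • ιf)
    (hef : ιe * ιf - ιf * ιe = ιH)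
    (hhE : ιH * ιE - ιE * ιH = ιE)
    (hhF : ιH * ιF - ιF * ιH = - ιF)
    (heE : ιe * ιE - ιE * ιe = 0)
    (heF : ιe * ιF - ιF * ιe = - ιE)
    (hfE : ιf * ιE - ιE * ιf = - ιF)
    (hfF : ιf * ιF - ιF * ιf = 0)
    (hEE : ιE * ιE + ιE * ιE = (2 : ℂ) • ιe)
    (hEF : ιE * ιF + ιF * ιE = ιH)
    (hFF : ιF * ιF + ιF * ιF = (-2 : ℂ) • ιf)
    -- h^e is central in g₀
    (hcen : ∀ i, ιh i * ιe = ιe * ιh i ∧ ιh i * ιH = ιH * ιh i ∧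
      ιh i * ιf = ιf * ιh i ∧ ιh i * ιE = ιE * ιh i ∧ ιh i * ιF = ιF * ιh i ∧
      ∀ j, ιh i * ιh j = ιh j * ιh i)
    -- the PBW theorem for U(g₀)
    (hPBWindep : LinearIndependent ℂ
      (fun z : ℕ × Fin 2 × (Fin km → ℕ) × ℕ × ℕ × Fin 2 =>
        ιf ^ z.1 * ιF ^ (z.2.1 : ℕ) * ringProd (fun i => ιh i ^ z.2.2.1 i) *
          ιH ^ z.2.2.2.1 * ιe ^ z.2.2.2.2.1 * ιE ^ (z.2.2.2.2.2 : ℕ)))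
    (hPBWspan : Submodule.span ℂ (Set.range
      (fun z : ℕ × Fin 2 × (Fin km → ℕ) × ℕ × ℕ × Fin 2 =>
        ιf ^ z.1 * ιF ^ (z.2.1 : ℕ) * ringProd (fun i => ιh i ^ z.2.2.1 i) *
          ιH ^ z.2.2.2.1 * ιe ^ z.2.2.2.2.1 * ιE ^ (z.2.2.2.2.2 : ℕ))) = ⊤)
    -- the left ideal (I₀)_χ and the invariants U(g₀,e) ⊆ (Q₀)_χ
    (I0 : Submodule Ug0 Ug0) (hI0 : I0 = Submodule.span Ug0 {ιf - 1})
    (Inv : Set (Ug0 ⧸ I0))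
    (hInv : Inv = {q : Ug0 ⧸ I0 | ∃ y : Ug0,
      (Submodule.Quotient.mk y : Ug0 ⧸ I0) = q ∧ ιf * y - y * ιf ∈ I0})
    -- representatives of the generators Θ′_E, C′_θ, Θ′_F
    (yE yC yF : Ug0)
    (hyE : yE = ιE + (1/2 : ℂ) • (ιF * ιH) - (3/4 : ℂ) • ιF)
    (hyC : yC = (2 : ℂ) • ιe + (1/2 : ℂ) • (ιH * ιH) - (3/2 : ℂ) • ιH + ιF * ιE)
    (hyF : yF = ιF)
    -- the center of U(g₀,e): invariant cosets commuting with all of U(g₀,e)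
    (Zcen : Set (Ug0 ⧸ I0))
    (hZcen : Zcen = {q : Ug0 ⧸ I0 | q ∈ Inv ∧ ∃ y : Ug0,
      (Submodule.Quotient.mk y : Ug0 ⧸ I0) = q ∧ ιf * y - y * ιf ∈ I0 ∧
      ∀ y' : Ug0, (Submodule.Quotient.mk y' : Ug0 ⧸ I0) ∈ Inv →
        (Submodule.Quotient.mk (y * y') : Ug0 ⧸ I0) =
          Submodule.Quotient.mk (y' * y)}) :
    -- (i) Z(U(g₀,e)) is generated by the Θ′_{h_i} and C′_θ: it equals the
    --     ℂ-span of the cosets of the monomials ∏(ιh i)^{t_i}·yC^{t_k}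
    (Zcen = (Submodule.span ℂ (Set.range
        (fun z : (Fin km → ℕ) × ℕ =>
          (Submodule.Quotient.mk
            (ringProd (fun i => ιh i ^ z.1 i) * yC ^ z.2) : Ug0 ⧸ I0))) :
      Set (Ug0 ⧸ I0)))
    ∧
    -- (ii) the projection Pr₀ : U(g₀) → (Q₀)_χ maps Z(U(g₀)) bijectively onto
    --      Z(U(g₀,e))
    Set.BijOn (fun y : Ug0 => (Submodule.Quotient.mk y : Ug0 ⧸ I0))
      (Subalgebra.center ℂ Ug0 : Set Ug0) Zcen := by
  have R : Aux.Rel ιh ιe ιH ιf ιE ιF := by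
    have half : ∀ x y : Ug0, x + x = (2 : ℂ) • y → x = y := by
      intro x y hxy
      have h1 : (1/2 : ℂ) • (x + x) = (1/2 : ℂ) • (2 : ℂ) • y := by rw [hxy]
      have h2 : (1/2 : ℂ) • (x + x) = x := by module
      have h3 : (1/2 : ℂ) • (2 : ℂ) • y = y := by module
      rw [← h2, h1, h3]
    exact
      { HE := by rw [← sub_eq_iff_eq_add']; exact hhE
        HF := by rw [sub_eq_add_neg, ← sub_eq_iff_eq_add']; exact hhF
        EF := eq_sub_of_add_eq hEF
        EE := half _ _ hEE
        FF := half _ _ (by rw [hFF]; module)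
        He := by rw [← sub_eq_iff_eq_add']; exact hhe
        fH := by
          have : ιH * ιf = ιf * ιH + (-2 : ℂ) • ιf := by rw [← sub_eq_iff_eq_add']; exact hhf
          rw [this]; module
        fe := by rw [← hef]; abel
        eE := sub_eq_zero.1 heE
        eF := by rw [sub_eq_add_neg, ← sub_eq_iff_eq_add']; exact heF
        fE := by rw [sub_eq_add_neg, ← sub_eq_iff_eq_add']; exact hfE
        fF := sub_eq_zero.1 hfF
        hE := fun i => (hcen i).2.2.2.1
        hF := fun i => (hcen i).2.2.2.2.1
        hH := fun i => (hcen i).2.1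
        hh := fun i j => (hcen i).2.2.2.2.2 j }
  have hs : Submodule.span ℂ (Set.range (Aux.mon ιh ιe ιH ιf ιE ιF)) = ⊤ := hPBWspan
  have hli : LinearIndependent ℂ (Aux.mon ιh ιe ιH ιf ιE ιF) := hPBWindep
  let B := Module.Basis.mk hli hs.ge
  have hB : ∀ i, B i = Aux.mon ιh ιe ιH ιf ιE ιF i := fun i => Module.Basis.mk_apply _ _ i
  have hw := Aux.w_inv I0 hI0
  have hyE' : yE = Aux.yE ιH ιE ιF := hyE
  -- the center lands in `Zcen`
  have hmaps : ∀ z ∈ Subalgebra.center ℂ Ug0, (Submodule.Quotient.mk z : Ug0 ⧸ I0) ∈ Zcen := by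
    intro z hz
    rw [Subalgebra.mem_center_iff] at hz
    have h0 : ιf * z - z * ιf ∈ I0 := by rw [hz, sub_self]; exact I0.zero_mem
    rw [hZcen]
    refine ⟨?_, z, rfl, h0, fun y' _ => by rw [hz]⟩
    rw [hInv]
    exact ⟨z, rfl, h0⟩
  have hform : ∀ q ∈ Zcen, ∃ p, q = Submodule.Quotient.mk (Aux.psi R hs p) := by
    intro q hq
    rw [hZcen] at hq
    obtain ⟨-, y, rfl, hy, hcom⟩ := hq
    refine Aux.center_form R hs B hB I0 hI0 y hy (hcom _ ?_) (hcom _ ?_)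
    · rw [hInv]
      refine ⟨ιF, rfl, ?_⟩
      rw [R.fF, sub_self]; exact I0.zero_mem
    · rw [hInv]
      refine ⟨_, rfl, ?_⟩
      rw [Aux.inv_iff I0 hI0, Aux.mk_eq]
      exact Aux.inv_yE R hw
  have hpow : ∀ k : ℕ, yC ^ k • (Submodule.Quotient.mk 1 : Ug0 ⧸ I0) =
      Aux.Cas ιe ιH ιf ιE ιF ^ k • (Submodule.Quotient.mk 1 : Ug0 ⧸ I0) := by
    have h1 : yC • (Submodule.Quotient.mk 1 : Ug0 ⧸ I0) =
        Aux.Cas ιe ιH ιf ιE ιF • (Submodule.Quotient.mk 1 : Ug0 ⧸ I0) := by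
      have : Aux.Cas ιe ιH ιf ιE ιF = yC + ((2 : ℂ) • ιe) * (ιf - 1) := by
        rw [hyC, Aux.Cas, mul_sub, mul_one, smul_mul_assoc]; abel
      rw [this, add_smul, mul_smul, sub_smul, hw, one_smul, sub_self, smul_zero, add_zero]
    have hc := Aux.cas_central R hs
    rw [Subalgebra.mem_center_iff] at hc
    intro k
    induction k with
    | zero => simp
    | succ k ih =>
      rw [pow_succ, mul_smul, h1, smul_smul, hc, mul_smul, ih, ← mul_smul, pow_succ']
  have hmon : ∀ (t : Fin km → ℕ) (k : ℕ),
      (Submodule.Quotient.mk (ringProd (fun i => ιh i ^ t i) * yC ^ k) : Ug0 ⧸ I0) =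
      Submodule.Quotient.mk (ringProd (fun i => ιh i ^ t i) * Aux.Cas ιe ιH ιf ιE ιF ^ k) := by
    intro t k
    rw [Aux.mk_eq, Aux.mk_eq I0 (_ * Aux.Cas ιe ιH ιf ιE ιF ^ k), mul_smul, mul_smul, hpow]
  refine ⟨?_, fun z hz => hmaps z hz, ?_, ?_⟩
  · apply Set.Subset.antisymm
    · intro q hq
      obtain ⟨p, rfl⟩ := hform q hq
      rw [SetLike.mem_coe]
      induction p using Aux.poly_ind with
      | mon k t c =>
        rw [Aux.psi_mon, Submodule.Quotient.mk_smul, ← hmon]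
        exact Submodule.smul_mem _ _ (Submodule.subset_span ⟨(t, k), rfl⟩)
      | add p q hp ih2 =>
        rw [map_add, Submodule.Quotient.mk_add]
        exact Submodule.add_mem _ (hp (hmaps _ (Aux.psi_central R hs p)))
          (ih2 (hmaps _ (Aux.psi_central R hs q)))
    · intro q hq
      have : ∃ p, q = Submodule.Quotient.mk (Aux.psi R hs p) := by
        rw [SetLike.mem_coe] at hq
        induction hq using Submodule.span_induction with
        | mem x hx =>
          obtain ⟨⟨t, k⟩, rfl⟩ := hx
          refine ⟨Polynomial.monomial k (MvPolynomial.monomial (Finsupp.equivFunOnFinite.symm t) 1),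
            ?_⟩
          rw [Aux.psi_mon, one_smul]
          exact hmon t k
        | zero => exact ⟨0, by simp⟩
        | add x y _ _ hx hy =>
          obtain ⟨p, rfl⟩ := hx
          obtain ⟨q, rfl⟩ := hy
          exact ⟨p + q, by rw [map_add, Submodule.Quotient.mk_add]⟩
        | smul c x _ hx =>
          obtain ⟨p, rfl⟩ := hx
          exact ⟨c • p, by rw [map_smul, Submodule.Quotient.mk_smul]⟩
      obtain ⟨p, rfl⟩ := this
      exact hmaps _ (Aux.psi_central R hs p)
  · intro z hz z' hz' heq
    have h0 : (Submodule.Quotient.mk (z - z') : Ug0 ⧸ I0) = 0 := by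
      rw [Submodule.Quotient.mk_sub, sub_eq_zero]; exact heq
    obtain ⟨u, hu⟩ := Aux.kills I0 hI0 h0
    exact sub_eq_zero.1 (Aux.central_inj B R hB (Subalgebra.sub_mem _ hz hz') hu)
  · intro q hq
    obtain ⟨p, rfl⟩ := hform q hq
    exact ⟨_, Aux.psi_central R hs p, rfl⟩
end
end
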